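/- For every n ≥ 4, writing m = ⌊n/2⌋, the covering type of the special orthogonal group SO(n) satisfies ct(SO(n)) ≥ (4m³ + 3m² + 5m + 12)/6; that is, for every topological space Y homotopy equivalent to SO(n) and every good cover U of Y, U has at least (4m³ + 3m² + 5m + 12)/6 members. -/

import Mathlib

/-- A good cover of `Y`: a finite family of open subsets covering `Y` such that every
nonempty intersection of (finitely many) members is contractible. -/
def IsGoodCover {Y : Type*} [TopologicalSpace Y] (U : Finset (Set Y)) : Prop :=
  (∀ s ∈ U, IsOpen s) ∧ (⋃₀ (U : Set (Set Y)) = Set.univ) ∧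
    ∀ T ⊆ U, T.Nonempty → (⋂₀ (T : Set (Set Y))).Nonempty →
      ContractibleSpace ↥(⋂₀ (T : Set (Set Y)))

section
open Topology Set Filter

namespace ASC

/-- cochains: functions on sequences -/
abbrev Co (X : Type*) := (ℕ → X) → ZMod 2

def skip (i : ℕ) : ℕ → ℕ := fun k => if k < i then k else k + 1

variable {X Y Z : Type*}

/-- coboundary from degree `p` to degree `p+1` -/
def dl (p : ℕ) (φ : Co X) : Co X := fun t => ∑ i ∈ Finset.range (p + 2), φ (t ∘ skip i)

/-- coboundary from degree `p-1` to `p`, zero if `p = 0` -/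
def d (p : ℕ) (φ : Co X) : Co X := if p = 0 then 0 else dl (p - 1) φ

def Deg (p : ℕ) (φ : Co X) : Prop := ∀ t t' : ℕ → X, (∀ i ≤ p, t i = t' i) → φ t = φ t'

def cup (p : ℕ) (φ ψ : Co X) : Co X := fun t => φ t * ψ (fun k => t (k + p))

def pb (f : X → Y) (φ : Co Y) : Co X := fun t => φ (f ∘ t)

def spl (f g : X → Y) (i : ℕ) (t : ℕ → X) : ℕ → Y :=
  fun k => if k ≤ i then f (t k) else g (t (k - 1))

def pr (p : ℕ) (f g : X → Y) (φ : Co Y) : Co X := fun t => ∑ i ∈ Finset.range p, φ (spl f g i t)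

theorem z2 (a : ZMod 2) : a + a = 0 := CharTwo.add_self_eq_zero a

theorem co2 (a : Co X) : a + a = 0 := by funext t; exact z2 _

@[simp] theorem d_zero (φ : Co X) : d 0 φ = 0 := by simp [d]
@[simp] theorem d_succ (p : ℕ) (φ : Co X) : d (p + 1) φ = dl p φ := by simp [d]

theorem dl_add (p : ℕ) (φ ψ : Co X) : dl p (φ + ψ) = dl p φ + dl p ψ := by
  funext t; simp [dl, Finset.sum_add_distrib]

theorem d_add (p : ℕ) (φ ψ : Co X) : d p (φ + ψ) = d p φ + d p ψ := by
  cases p <;> simp [dl_add]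

theorem dl_zero (p : ℕ) : dl p (0 : Co X) = 0 := by
  funext t; simp [dl]

theorem d_zero' (p : ℕ) : d p (0 : Co X) = 0 := by
  cases p <;> simp [dl_zero]

theorem skip_skip (i j : ℕ) (h : i ≤ j) : skip i ∘ skip j = skip (j + 1) ∘ skip i := by
  funext k; simp only [skip, Function.comp]; grind

theorem dl_dl (p : ℕ) (φ : Co X) : dl (p + 1) (dl p φ) = 0 := by
  funext t
  simp only [dl, Pi.zero_apply]
  rw [← Finset.sum_product']
  refine Finset.sum_involution
    (fun a _ => if a.1 ≤ a.2 then (a.2 + 1, a.1) else (a.2, a.1 - 1)) ?_ ?_ ?_ ?_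
  · rintro ⟨i, j⟩ _
    simp only
    split_ifs with h
    · simp only [Function.comp_assoc]
      rw [skip_skip i j h]; exact z2 _
    · simp only [Function.comp_assoc]
      have h1 : skip i = skip (i - 1 + 1) := by congr 1; omega
      rw [skip_skip j (i - 1) (by omega), ← h1]; exact z2 _
  · rintro ⟨i, j⟩ _ _
    simp only
    split_ifs with h <;> simp <;> omega
  · rintro ⟨i, j⟩ hm
    simp only [Finset.mem_product, Finset.mem_range] at hm ⊢
    split_ifs with h <;> simp <;> omega
  · rintro ⟨i, j⟩ hm
    simp only
    split_ifs with h h1 h2 <;> simp_all <;> omega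

theorem dl_d (p : ℕ) (φ : Co X) : dl p (d p φ) = 0 := by
  cases p with
  | zero => simp [dl_zero]
  | succ p => simp [dl_dl]

theorem dl_pb (p : ℕ) (f : X → Y) (φ : Co Y) : dl p (pb f φ) = pb f (dl p φ) := rfl

theorem d_pb (p : ℕ) (f : X → Y) (φ : Co Y) : d p (pb f φ) = pb f (d p φ) := by
  cases p with
  | zero => simp; rfl
  | succ p => simp [dl_pb]

theorem pb_add (f : X → Y) (φ ψ : Co Y) : pb f (φ + ψ) = pb f φ + pb f ψ := rfl

theorem pb_pb (f : X → Y) (g : Y → Z) (φ : Co Z) : pb f (pb g φ) = pb (g ∘ f) φ := rfl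

theorem pb_cup (p : ℕ) (f : X → Y) (φ ψ : Co Y) : pb f (cup p φ ψ) = cup p (pb f φ) (pb f ψ) := rfl

theorem cup_add (p : ℕ) (φ ψ ψ' : Co X) : cup p φ (ψ + ψ') = cup p φ ψ + cup p φ ψ' := by
  funext t; simp [cup, mul_add]

theorem add_cup (p : ℕ) (φ φ' ψ : Co X) : cup p (φ + φ') ψ = cup p φ ψ + cup p φ' ψ := by
  funext t; simp [cup, add_mul]

theorem cup_assoc (p q : ℕ) (φ ψ χ : Co X) :
    cup (p + q) (cup p φ ψ) χ = cup p φ (cup q ψ χ) := by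
  funext t; simp only [cup, mul_assoc]
  congr 3; funext k; congr 1; omega

theorem cup_zero (p : ℕ) (φ : Co X) : cup p φ 0 = 0 := by funext t; simp [cup]

theorem dl_cup (p q : ℕ) (φ ψ : Co X) (h : Deg p φ) :
    dl (p + q) (cup p φ ψ) = cup (p + 1) (dl p φ) ψ + cup p φ (dl q ψ) := by
  funext t
  simp only [dl, cup, Pi.add_apply, Finset.sum_mul, Finset.mul_sum]
  have e : p + q + 2 = (p + 1) + (q + 1) := by ring
  rw [e, Finset.sum_range_add, Finset.sum_range_succ (n := p + 1), Finset.sum_range_succ' (n := q + 1)]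
  have h1 : ∀ i ∈ Finset.range (p + 1), φ (t ∘ skip i) * ψ (fun k => (t ∘ skip i) (k + p)) =
      φ (t ∘ skip i) * ψ (fun k => t (k + (p + 1))) := by
    intro i hi
    have hi := Finset.mem_range.1 hi
    congr 2; funext k; simp only [Function.comp, skip]; congr 1
    rw [if_neg (by omega)]; ring
  rw [Finset.sum_congr rfl h1]
  have h2 : ∀ i ∈ Finset.range (q + 1), φ (t ∘ skip (p + 1 + i)) * ψ (fun k => (t ∘ skip (p + 1 + i)) (k + p)) =
      φ t * ψ ((fun k => t (k + p)) ∘ skip (i + 1)) := by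
    intro i hi
    congr 1
    · apply h; intro j hj; simp only [Function.comp, skip]; rw [if_pos (by omega)]
    · congr 1; funext k; simp only [Function.comp, skip]; congr 1
      split_ifs <;> omega
  rw [Finset.sum_congr rfl h2]
  have h3 : φ (t ∘ skip (p + 1)) = φ t := by
    apply h; intro j hj; simp only [Function.comp, skip]; rw [if_pos (by omega)]
  have h4 : ((fun k => t (k + p)) ∘ skip 0) = fun k => t (k + (p + 1)) := by
    funext k; simp only [Function.comp, skip]; congr 1; simp; ring
  rw [h3, h4]
  have := z2 (φ t * ψ (fun k => t (k + (p + 1))))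
  linear_combination -this

theorem prism_aux (p : ℕ) (a b : ℕ → ℕ → ZMod 2) (P : ℕ → ZMod 2)
    (h1 : ∀ i, a i i = P i) (h2 : ∀ i, a i (i + 1) = P (i + 1))
    (h3 : ∀ i k, k < i → a i k = b (i - 1) k)
    (h4 : ∀ i k, i + 1 < k → a i k = b i (k - 1)) :
    ∑ i ∈ Finset.range (p + 1), ∑ k ∈ Finset.range (p + 2), a i k =
      P 0 + P (p + 1) + ∑ k ∈ Finset.range (p + 1), ∑ i ∈ Finset.range p, b i k := by
  have row : ∀ i ∈ Finset.range (p + 1), ∑ k ∈ Finset.range (p + 2), a i k =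
      ∑ k ∈ Finset.range i, b (i - 1) k + (P i + P (i + 1)) +
        ∑ k ∈ Finset.Ico (i + 1) (p + 1), b i k := by
    intro i hi
    have hi := Finset.mem_range.1 hi
    rw [← Finset.sum_range_add_sum_Ico _ (show i + 2 ≤ p + 2 by omega), Finset.sum_range_succ,
      Finset.sum_range_succ, h1, h2, Finset.sum_congr rfl (fun k hk => h3 i k (Finset.mem_range.1 hk))]
    have : ∑ k ∈ Finset.Ico (i + 2) (p + 2), a i k = ∑ k ∈ Finset.Ico (i + 1) (p + 1), b i k := by
      rw [← Finset.sum_Ico_add' (fun k => a i k) (i + 1) (p + 1) 1]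
      refine Finset.sum_congr rfl fun k hk => ?_
      have := Finset.mem_Ico.1 hk
      rw [h4 i (k + 1) (by omega)]; rfl
    rw [this]; ring
  rw [Finset.sum_congr rfl row, Finset.sum_add_distrib, Finset.sum_add_distrib]
  have tel : ∀ m, ∑ i ∈ Finset.range m, (P i + P (i + 1)) = P 0 + P m := by
    intro m
    induction m with
    | zero => simp [z2]
    | succ m ih => rw [Finset.sum_range_succ, ih]; linear_combination z2 (P m)
  rw [tel, Finset.sum_range_succ', Finset.sum_range_succ (fun i => ∑ k ∈ Finset.Ico (i + 1) (p + 1), b i k)]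
  simp only [Finset.range_zero, Finset.sum_empty, add_zero, Finset.Ico_self]
  rw [Finset.sum_comm (s := Finset.range (p+1))]
  have : ∀ i ∈ Finset.range p, ∑ k ∈ Finset.range (p + 1), b i k =
    ∑ k ∈ Finset.range (i + 1), b i k + ∑ k ∈ Finset.Ico (i + 1) (p + 1), b i k := by
    intro i hi
    have hi := Finset.mem_range.1 hi
    rw [Finset.sum_range_add_sum_Ico _ (by omega)]
  rw [Finset.sum_congr rfl this, Finset.sum_add_distrib]
  simp only [Nat.add_sub_cancel]
  ring

theorem prism (p : ℕ) (f g : X → Y) (φ : Co Y) (h : Deg p φ) :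
    pr (p + 1) f g (dl p φ) + d p (pr p f g φ) = pb f φ + pb g φ := by
  funext t
  have key := prism_aux p (fun i k => φ (spl f g i t ∘ skip k)) (fun i k => φ (spl f g i (t ∘ skip k)))
    (fun i => φ (fun k => if k < i then f (t k) else g (t k)))
    (by intro i; congr 1; funext k; simp only [spl, Function.comp, skip]; grind)
    (by intro i; congr 1; funext k; simp only [spl, Function.comp, skip]; grind)
    (by intro i k hk; congr 1; funext j; simp only [spl, Function.comp, skip]; grind)
    (by intro i k hk; congr 1; funext j; simp only [spl, Function.comp, skip]; grind)
  have e1 : φ (fun k => if k < p + 1 then f (t k) else g (t k)) = φ (f ∘ t) := by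
    apply h; intro i hi; simp [Nat.lt_succ_of_le hi]
  have e2 : (fun k => if k < 0 then f (t k) else g (t k)) = g ∘ t := by funext k; simp
  simp only [e1, e2] at key
  have e3 : (pr (p + 1) f g (dl p φ)) t =
    ∑ i ∈ Finset.range (p + 1), ∑ k ∈ Finset.range (p + 2), φ (spl f g i t ∘ skip k) := rfl
  have e4 : (d p (pr p f g φ)) t = ∑ k ∈ Finset.range (p + 1), ∑ i ∈ Finset.range p, φ (spl f g i (t ∘ skip k)) := by
    cases p with
    | zero => simp
    | succ p => simp [dl, pr]
  rw [Pi.add_apply, Pi.add_apply, e3, e4, key]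
  simp only [pb]
  linear_combination z2 (∑ k ∈ Finset.range (p + 1), ∑ i ∈ Finset.range p, φ (spl f g i (t ∘ skip k)))

/-! degrees -/

theorem Deg.mono {p q : ℕ} {φ : Co X} (h : Deg p φ) (hpq : p ≤ q) : Deg q φ :=
  fun t t' ht => h t t' fun i hi => ht i (hi.trans hpq)

theorem Deg.add {p : ℕ} {φ ψ : Co X} (h : Deg p φ) (h' : Deg p ψ) : Deg p (φ + ψ) := by
  intro t t' ht; simp [h t t' ht, h' t t' ht]

theorem Deg.zero {p : ℕ} : Deg p (0 : Co X) := fun _ _ _ => rfl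

theorem Deg.pb {p : ℕ} {φ : Co Y} (h : Deg p φ) (f : X → Y) : Deg p (pb f φ) := by
  intro t t' ht; apply h; intro i hi; simp [ht i hi]

theorem Deg.dl {p : ℕ} {φ : Co X} (h : Deg p φ) : Deg (p + 1) (dl p φ) := by
  intro t t' ht; refine Finset.sum_congr rfl fun k _ => h _ _ fun i hi => ht _ ?_
  simp only [skip]; split_ifs <;> omega

theorem Deg.d {p : ℕ} {φ : Co X} (h : Deg (p - 1) φ) : Deg p (d p φ) := by
  cases p with
  | zero => simp [Deg.zero]
  | succ p => simpa using Deg.dl h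

theorem Deg.cup {p q : ℕ} {φ ψ : Co X} (h : Deg p φ) (h' : Deg q ψ) : Deg (p + q) (cup p φ ψ) := by
  intro t t' ht
  simp only [ASC.cup]
  rw [h t t' fun i hi => ht i (by omega), h' _ _ fun i hi => ht (i + p) (by omega)]

theorem Deg.pr {p : ℕ} {φ : Co Y} (h : Deg p φ) (f g : X → Y) : Deg (p - 1) (pr p f g φ) := by
  intro t t' ht; refine Finset.sum_congr rfl fun k hk => h _ _ fun i hi => ?_
  have := Finset.mem_range.1 hk
  simp only [spl]; split_ifs
  · rw [ht i (by omega)]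
  · rw [ht (i - 1) (by omega)]

end ASC
end

section
open Topology Set Filter

namespace ASC

variable {X Y Z : Type*}

theorem two0 : (2 : Co X) = 0 := by funext t; exact (by decide : (2 : ZMod 2) = 0)

theorem eq_of_add (a b : Co X) (h : a + b = 0) : a = b := by
  have := two0 (X := X); grind

section top
variable [TopologicalSpace X] [TopologicalSpace Y] [TopologicalSpace Z]

def NZ (C S : Set X) (φ : Co X) : Prop :=
  ∀ x ∈ C, ∃ W ∈ 𝓝 x, ∀ t : ℕ → X, (∀ i, t i ∈ W ∩ S) → φ t = 0

theorem NZ.mono {C S C' S' : Set X} {φ : Co X} (h : NZ C S φ) (hC : C' ⊆ C) (hS : S' ⊆ S) :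
    NZ C' S' φ := fun x hx => by
  obtain ⟨W, hW, h⟩ := h x (hC hx)
  exact ⟨W, hW, fun t ht => h t fun i => ⟨(ht i).1, hS (ht i).2⟩⟩

theorem NZ.of_eq {C S : Set X} {φ : Co X} (h : ∀ t : ℕ → X, (∀ i, t i ∈ S) → φ t = 0) : NZ C S φ :=
  fun _ _ => ⟨univ, univ_mem, fun t ht => h t fun i => (ht i).2⟩

theorem NZ.zero {C S : Set X} : NZ C S (0 : Co X) := NZ.of_eq fun _ _ => rfl

theorem NZ.add {C S : Set X} {φ ψ : Co X} (h : NZ C S φ) (h' : NZ C S ψ) : NZ C S (φ + ψ) := by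
  intro x hx
  obtain ⟨W, hW, h⟩ := h x hx
  obtain ⟨W', hW', h'⟩ := h' x hx
  refine ⟨W ∩ W', inter_mem hW hW', fun t ht => ?_⟩
  rw [Pi.add_apply, h t fun i => ⟨(ht i).1.1, (ht i).2⟩, h' t fun i => ⟨(ht i).1.2, (ht i).2⟩, add_zero]

theorem NZ.congr {C S : Set X} {φ ψ : Co X} (h : NZ C S φ)
    (e : ∀ t : ℕ → X, (∀ i, t i ∈ S) → φ t = ψ t) : NZ C S ψ := fun x hx => by
  obtain ⟨W, hW, h⟩ := h x hx
  exact ⟨W, hW, fun t ht => by rw [← e t fun i => (ht i).2, h t ht]⟩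

theorem NZ.cupl {C S : Set X} {φ : Co X} (h : NZ C S φ) (p : ℕ) (ψ : Co X) : NZ C S (cup p φ ψ) := by
  intro x hx
  obtain ⟨W, hW, h⟩ := h x hx
  exact ⟨W, hW, fun t ht => by simp [cup, h t ht]⟩

theorem NZ.cupr {C S : Set X} {ψ : Co X} (h : NZ C S ψ) (p : ℕ) (φ : Co X) : NZ C S (cup p φ ψ) := by
  intro x hx
  obtain ⟨W, hW, h⟩ := h x hx
  exact ⟨W, hW, fun t ht => by simp [cup, h (fun k => t (k + p)) fun i => ht _]⟩

theorem NZ.dl {C S : Set X} {φ : Co X} (h : NZ C S φ) (p : ℕ) : NZ C S (dl p φ) := by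
  intro x hx
  obtain ⟨W, hW, h⟩ := h x hx
  exact ⟨W, hW, fun t ht => Finset.sum_eq_zero fun k _ => h _ fun i => ht _⟩

/-- `f` maps points of `C` to `C'` and is continuous there along `S`, to `S'`. -/
def Near (f : X → Y) (C S : Set X) (C' S' : Set Y) : Prop :=
  ∀ x ∈ C, f x ∈ C' ∧ Tendsto f (𝓝[S] x) (𝓝[S'] (f x))

theorem NZ.pb {C S : Set X} {C' S' : Set Y} {f : X → Y} {φ : Co Y} (h : NZ C' S' φ)
    (hf : Near f C S C' S') : NZ C S (pb f φ) := by
  intro x hx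
  obtain ⟨W, hW, h⟩ := h _ (hf x hx).1
  have := (hf x hx).2 (inter_mem_nhdsWithin S' hW)
  obtain ⟨V, hV, hV'⟩ := mem_nhdsWithin_iff_exists_mem_nhds_inter.1 this
  refine ⟨V, hV, fun t ht => h _ fun i => ?_⟩
  have := hV' (ht i)
  exact ⟨this.2, this.1⟩

theorem NZ.pr {C S : Set X} {C' S' : Set Y} {f g : X → Y} {φ : Co Y} (h : NZ C' S' φ)
    (hf : Near f C S C' S') (hg : ∀ x ∈ C, Tendsto g (𝓝[S] x) (𝓝[S'] (f x))) (p : ℕ) :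
    NZ C S (pr p f g φ) := by
  intro x hx
  obtain ⟨W, hW, h⟩ := h _ (hf x hx).1
  have h1 := (hf x hx).2 (inter_mem_nhdsWithin S' hW)
  have h2 := hg x hx (inter_mem_nhdsWithin S' hW)
  obtain ⟨V, hV, hV'⟩ := mem_nhdsWithin_iff_exists_mem_nhds_inter.1 (inter_mem h1 h2)
  refine ⟨V, hV, fun t ht => Finset.sum_eq_zero fun k _ => h _ fun i => ?_⟩
  simp only [spl]
  split_ifs
  · have := hV' (ht i)
    exact ⟨this.1.2, this.1.1⟩
  · have := hV' (ht (i - 1))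
    exact ⟨this.2.2, this.2.1⟩

theorem Near.of_cont {f : X → Y} {S : Set X} {S' : Set Y} (h : ContinuousOn f S) (hm : MapsTo f S S') :
    Near f S S S' S' := fun x hx => ⟨hm hx, (h x hx).tendsto_nhdsWithin hm⟩

def Coc (S : Set X) (p : ℕ) (φ : Co X) : Prop := Deg p φ ∧ NZ S S (dl p φ)
def Cob (S : Set X) (p : ℕ) (φ : Co X) : Prop := ∃ β, Deg (p - 1) β ∧ NZ S S (φ + d p β)

theorem Coc.mono {S S' : Set X} {p : ℕ} {φ : Co X} (h : Coc S p φ) (hs : S' ⊆ S) : Coc S' p φ :=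
  ⟨h.1, h.2.mono hs hs⟩
theorem Cob.mono {S S' : Set X} {p : ℕ} {φ : Co X} (h : Cob S p φ) (hs : S' ⊆ S) : Cob S' p φ := by
  obtain ⟨β, h1, h2⟩ := h
  exact ⟨β, h1, h2.mono hs hs⟩
theorem Coc.add {S : Set X} {p : ℕ} {φ ψ : Co X} (h : Coc S p φ) (h' : Coc S p ψ) : Coc S p (φ + ψ) :=
  ⟨h.1.add h'.1, by rw [dl_add]; exact h.2.add h'.2⟩
theorem Cob.add {S : Set X} {p : ℕ} {φ ψ : Co X} (h : Cob S p φ) (h' : Cob S p ψ) : Cob S p (φ + ψ) := by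
  obtain ⟨β, h1, h2⟩ := h
  obtain ⟨β', h1', h2'⟩ := h'
  refine ⟨β + β', h1.add h1', ?_⟩
  have := h2.add h2'
  rw [d_add]; convert this using 1; ring
theorem Cob.of_NZ {S : Set X} {p : ℕ} {φ : Co X} (h : NZ S S φ) : Cob S p φ :=
  ⟨0, Deg.zero, by simpa [d_zero'] using h⟩
theorem Cob.congr {S : Set X} {p : ℕ} {φ ψ : Co X} (h : Cob S p φ)
    (e : ∀ t : ℕ → X, (∀ i, t i ∈ S) → φ t = ψ t) : Cob S p ψ := by
  obtain ⟨β, h1, h2⟩ := h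
  exact ⟨β, h1, h2.congr fun t ht => by simp [e t ht]⟩
/-- from `φ + ψ` and `ψ` get `φ` -/
theorem Cob.of_add {S : Set X} {p : ℕ} {φ ψ : Co X} (h : Cob S p (φ + ψ)) (h' : Cob S p ψ) : Cob S p φ := by
  have := h.add h'
  rwa [add_assoc, co2, add_zero] at this
theorem Cob.trans {S : Set X} {p : ℕ} {φ ψ χ : Co X} (h : Cob S p (φ + ψ)) (h' : Cob S p (ψ + χ)) :
    Cob S p (φ + χ) := by
  have := h.add h'
  convert this using 1
  have := two0 (X := X); grind
theorem Cob.d {S : Set X} {p : ℕ} {β : Co X} (h : Deg (p - 1) β) : Cob S p (d p β) :=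
  ⟨β, h, by rw [co2]; exact NZ.zero⟩
theorem Coc.cup {S : Set X} {p q : ℕ} {φ ψ : Co X} (h : Coc S p φ) (h' : Coc S q ψ) :
    Coc S (p + q) (cup p φ ψ) :=
  ⟨h.1.cup h'.1, by rw [dl_cup p q _ _ h.1]; exact (h.2.cupl _ _).add (h'.2.cupr _ _)⟩
theorem Coc.d {S : Set X} {p : ℕ} {β : Co X} (h : Deg (p - 1) β) : Coc S p (d p β) :=
  ⟨h.d, by rw [dl_d]; exact NZ.zero⟩
theorem Coc.pb {S : Set X} {S' : Set Y} {p : ℕ} {f : X → Y} {φ : Co Y} (h : Coc S' p φ)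
    (hf : ContinuousOn f S) (hm : MapsTo f S S') : Coc S p (pb f φ) :=
  ⟨h.1.pb f, by rw [dl_pb]; exact h.2.pb (Near.of_cont hf hm)⟩
theorem Cob.pb {S : Set X} {S' : Set Y} {p : ℕ} {f : X → Y} {φ : Co Y} (h : Cob S' p φ)
    (hf : ContinuousOn f S) (hm : MapsTo f S S') : Cob S p (pb f φ) := by
  obtain ⟨β, h1, h2⟩ := h
  refine ⟨ASC.pb f β, h1.pb f, ?_⟩
  rw [d_pb, ← pb_add]; exact h2.pb (Near.of_cont hf hm)

theorem cob_d_cup {S : Set X} {p q : ℕ} {α y : Co X} (h : Deg (p - 1) α) (hy : Coc S q y) :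
    Cob S (p + q) (cup p (d p α) y) := by
  cases p with
  | zero => exact Cob.of_NZ (by simpa using NZ.zero.cupl _ _)
  | succ p =>
    refine ⟨cup p α y, (Deg.cup (p := p) h hy.1).mono (by omega), ?_⟩
    have e : d (p + 1 + q) (cup p α y) = dl (p + q) (cup p α y) := by
      rw [show p + 1 + q = p + q + 1 by ring, d_succ]
    rw [e, dl_cup p q _ _ h, d_succ, ← add_assoc, co2, zero_add]
    exact hy.2.cupr _ _

theorem cob_cup_d {S : Set X} {p q : ℕ} {x β : Co X} (hx : Coc S p x) (h : Deg (q - 1) β) :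
    Cob S (p + q) (cup p x (d q β)) := by
  cases q with
  | zero => exact Cob.of_NZ (by simpa using NZ.zero.cupr _ _)
  | succ q =>
    refine ⟨cup p x β, (Deg.cup hx.1 h).mono (by simp), ?_⟩
    rw [← add_assoc, d_succ, d_succ, dl_cup p q _ _ hx.1]
    have : cup p x (dl q β) + (cup (p + 1) (dl p x) β + cup p x (dl q β)) = cup (p + 1) (dl p x) β := by
      have := two0 (X := X); grind
    rw [this]
    exact hx.2.cupl _ _

theorem Cob.cupl {S : Set X} {p q : ℕ} {φ ψ : Co X} (h : Cob S p φ) (h' : Coc S q ψ) :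
    Cob S (p + q) (cup p φ ψ) := by
  obtain ⟨β, h1, h2⟩ := h
  have := (Cob.of_NZ (p := p + q) (h2.cupl p ψ)).add (cob_d_cup h1 h')
  rwa [add_cup, add_assoc, co2, add_zero] at this

theorem Cob.cupr {S : Set X} {p q : ℕ} {φ ψ : Co X} (h : Coc S p φ) (h' : Cob S q ψ) :
    Cob S (p + q) (cup p φ ψ) := by
  obtain ⟨β, h1, h2⟩ := h'
  have := (Cob.of_NZ (p := p + q) (h2.cupr p φ)).add (cob_cup_d h h1)
  rwa [cup_add, add_assoc, co2, add_zero] at this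

/-! retractions -/

def IsRet (K : Set X) (r : X → X) : Prop := (∀ x ∈ K, r x = x) ∧ ∀ x ∈ K, Tendsto r (𝓝 x) (𝓝[K] x)

theorem exists_ret [TopologicalSpace.PseudoMetrizableSpace X] {K : Set X} (hK : IsClosed K) :
    ∃ r, IsRet K r := by
  letI := TopologicalSpace.pseudoMetrizableSpacePseudoMetric X
  rcases K.eq_empty_or_nonempty with rfl | hne
  · exact ⟨id, by simp [IsRet]⟩
  have : ∀ y, ∃ z ∈ K, dist y z ≤ 2 * Metric.infDist y K ∧ (y ∈ K → z = y) := by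
    intro y
    by_cases hy : y ∈ K
    · exact ⟨y, hy, by simp [Metric.infDist_nonneg], fun _ => rfl⟩
    · have hp : 0 < Metric.infDist y K := (hK.notMem_iff_infDist_pos hne).1 hy
      obtain ⟨z, hz, h⟩ := (Metric.infDist_lt_iff hne).1 (show Metric.infDist y K < 2 * Metric.infDist y K by linarith)
      exact ⟨z, hz, h.le, fun h => absurd h hy⟩
  choose r h1 h2 h3 using this
  refine ⟨r, fun x hx => h3 x hx, fun x hx => ?_⟩
  refine tendsto_nhdsWithin_iff.2 ⟨?_, Eventually.of_forall h1⟩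
  rw [tendsto_iff_dist_tendsto_zero]
  have : Tendsto (fun y => 3 * dist y x) (𝓝 x) (𝓝 0) := by
    have : Continuous fun y => 3 * dist y x := by fun_prop
    simpa using this.tendsto x
  refine squeeze_zero (fun _ => dist_nonneg) (fun y => ?_) this
  have := Metric.infDist_le_dist_of_mem (x := y) hx
  have := dist_triangle (r y) y x
  have := h2 y
  rw [dist_comm (r y) y] at *
  linarith

theorem IsRet.near {K : Set X} {r : X → X} (h : IsRet K r) (S : Set X) : Near r K S K K := fun x hx => by
  refine ⟨by rwa [h.1 x hx], ?_⟩
  rw [h.1 x hx]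
  exact (h.2 x hx).mono_left inf_le_left

theorem near_id {K S : Set X} : Near id K S K S := fun x hx => ⟨hx, tendsto_id⟩

theorem IsRet.nz_pr {K S : Set X} {r : X → X} (h : IsRet K r) (hKS : K ⊆ S) {φ : Co X}
    (hφ : NZ K S φ) (p : ℕ) : NZ K S (pr p id r φ) :=
  hφ.pr near_id (fun x hx => ((h.2 x hx).mono_left inf_le_left).mono_right (nhdsWithin_mono x hKS)) p

/-- the tautness computation -/
theorem taut {K S : Set X} {r : X → X} (h : IsRet K r) (hKS : K ⊆ S) {p : ℕ} {φ γ : Co X}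
    (hd : Deg p φ) (hφ : NZ K S (dl p φ)) (hγ : NZ K K (φ + d p γ)) :
    NZ K S (φ + d p (pb r γ + pr p id r φ)) := by
  have h1 := hγ.pb (h.near S)
  have h2 := h.nz_pr hKS hφ (p + 1)
  have h3 := prism p id r φ hd
  convert h1.add h2 using 1
  rw [d_add, d_pb, pb_add]
  have e : pb id φ = φ := rfl
  rw [e] at h3
  have := two0 (X := X); grind

/-! Mayer-Vietoris -/

open Classical in
noncomputable def ch (A : Set X) : Co X := fun t => if t 0 ∈ A then 1 else 0

theorem ch_deg (A : Set X) : Deg 0 (ch A) := fun t t' h => by simp only [ch]; rw [h 0 le_rfl]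

noncomputable def De (A : Set X) (θ : Co X) : Co X := cup 1 (dl 0 (ch A)) θ

theorem ch_one {A : Set X} {t : ℕ → X} (h : ∀ i, t i ∈ A) : ch A t = 1 := by simp [ch, h]
theorem ch_zero {A : Set X} {t : ℕ → X} (h : ∀ i, t i ∉ A) : ch A t = 0 := by simp [ch, h]

theorem dch_one {A : Set X} {t : ℕ → X} (h : ∀ i, t i ∈ A) : dl 0 (ch A) t = 0 := by
  simp [dl, Finset.sum_range_succ, ch, h]; rfl
theorem dch_zero {A : Set X} {t : ℕ → X} (h : ∀ i, t i ∉ A) : dl 0 (ch A) t = 0 := by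
  simp [dl, Finset.sum_range_succ, ch, h]

theorem De_one {A : Set X} {t : ℕ → X} (h : ∀ i, t i ∈ A) (θ : Co X) : De A θ t = 0 := by
  simp [De, cup, dch_one h]

theorem De_add (A : Set X) (θ η : Co X) : De A (θ + η) = De A θ + De A η := cup_add _ _ _ _

theorem De_deg {A : Set X} {p : ℕ} {θ : Co X} (h : Deg p θ) : Deg (p + 1) (De A θ) := by
  have := Deg.cup (ch_deg A).dl h
  rwa [show 0 + 1 + p = p + 1 by ring] at this

theorem dl_De (A : Set X) (p : ℕ) (θ : Co X) : dl (p + 1) (De A θ) = De A (dl p θ) := by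
  have := dl_cup 1 p (dl 0 (ch A)) θ (ch_deg A).dl
  rw [show p + 1 = 1 + p by ring]
  simp only [De, this, dl_dl]
  funext t; simp [cup]

theorem dl_ch_cup (A : Set X) (p : ℕ) (θ : Co X) :
    dl p (cup 0 (ch A) θ) = De A θ + cup 0 (ch A) (dl p θ) := by
  have := dl_cup 0 p (ch A) θ (ch_deg A)
  rwa [zero_add] at this

theorem De_cup (A : Set X) (p : ℕ) (θ y : Co X) : cup (p + 1) (De A θ) y = De A (cup p θ y) := by
  rw [add_comm]; exact cup_assoc 1 p _ _ _

variable {A B : Set X}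

theorem nz_cases (hA : IsClosed A) (hB : IsClosed B) {S : Set X} (hS : S ⊆ A ∪ B) {φ : Co X}
    (h1 : NZ (S ∩ (A ∩ B)) S φ) (h2 : NZ (S ∩ A) (S ∩ A) φ) (h3 : NZ (S ∩ B) ((S ∩ B) \ A) φ) : NZ S S φ := by
  intro x hx
  by_cases hxA : x ∈ A
  · by_cases hxB : x ∈ B
    · exact h1 x ⟨hx, hxA, hxB⟩
    · obtain ⟨W, hW, h⟩ := h2 x ⟨hx, hxA⟩
      refine ⟨W ∩ Bᶜ, inter_mem hW (hB.isOpen_compl.mem_nhds hxB), fun t ht => h t fun i => ⟨(ht i).1.1, (ht i).2, ?_⟩⟩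
      exact (hS (ht i).2).resolve_right (ht i).1.2
  · have hxB := (hS hx).resolve_left hxA
    obtain ⟨W, hW, h⟩ := h3 x ⟨hx, hxB⟩
    refine ⟨W ∩ Aᶜ, inter_mem hW (hA.isOpen_compl.mem_nhds hxA), fun t ht => h t fun i => ⟨(ht i).1.1, ⟨(ht i).2, ?_⟩, (ht i).1.2⟩⟩
    exact (hS (ht i).2).resolve_left (ht i).1.2

theorem nz_De (hA : IsClosed A) (hB : IsClosed B) {θ : Co X} (h : NZ (A ∩ B) (A ∪ B) θ) :
    NZ (A ∪ B) (A ∪ B) (De A θ) := by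
  refine nz_cases hA hB subset_rfl ((h.mono inter_subset_right subset_rfl).cupr _ _) ?_ ?_
  · exact NZ.of_eq fun t ht => De_one (fun i => (ht i).2) _
  · exact NZ.of_eq fun t ht => by simp [De, cup, dch_zero fun i => (ht i).2]

theorem nz_glue (hA : IsClosed A) (hB : IsClosed B) {φ ψ : Co X} (h : NZ A (A ∪ B) φ)
    (h' : NZ B (A ∪ B) ψ) : NZ (A ∪ B) (A ∪ B) (ψ + cup 0 (ch A) (φ + ψ)) := by
  refine nz_cases hA hB subset_rfl ?_ ?_ ?_
  · have h1 := h.mono (C' := (A ∪ B) ∩ (A ∩ B)) (fun x hx => hx.2.1) subset_rfl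
    have h2 := h'.mono (C' := (A ∪ B) ∩ (A ∩ B)) (fun x hx => hx.2.2) subset_rfl
    exact h2.add ((h1.add h2).cupr _ _)
  · refine (h.mono inter_subset_right inter_subset_left).congr fun t ht => ?_
    simp only [cup, Pi.add_apply, ch_one fun i => (ht i).2]
    have := z2 (ψ t); simp; grind
  · refine (h'.mono inter_subset_right (fun x hx => hx.1.1)).congr fun t ht => ?_
    simp [cup, ch_zero fun i => (ht i).2]

theorem De_coc (hA : IsClosed A) (hB : IsClosed B) {p : ℕ} {θ : Co X} (hd : Deg p θ)
    (h : NZ (A ∩ B) (A ∪ B) (dl p θ)) : Coc (A ∪ B) (p + 1) (De A θ) :=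
  ⟨De_deg hd, by rw [dl_De]; exact nz_De hA hB h⟩

theorem De_cob (hA : IsClosed A) (hB : IsClosed B) {p : ℕ} {θ γ : Co X} (hd : Deg (p - 1) γ)
    (h : NZ (A ∩ B) (A ∪ B) (θ + d p γ)) : Cob (A ∪ B) (p + 1) (De A θ) := by
  have h1 := nz_De hA hB h
  cases p with
  | zero => exact Cob.of_NZ (by simpa using h1)
  | succ p =>
    refine ⟨De A γ, De_deg hd, ?_⟩
    rw [d_succ, dl_De, ← De_add]; simpa using h1

theorem ch_cup_one {A : Set X} {t : ℕ → X} (h : ∀ i, t i ∈ A) (θ : Co X) : cup 0 (ch A) θ t = θ t := by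
  simp [cup, ch_one h]

theorem mv1_zero {a : Co X} (hd : Deg 0 a) (h1 : NZ A A a) (h2 : NZ B B a) : NZ (A ∪ B) (A ∪ B) a := by
  intro x hx
  have key : ∀ {A : Set X}, NZ A A a → ∀ y ∈ A, a (fun _ => y) = 0 := by
    intro A h y hy
    obtain ⟨W, hW, h⟩ := h y hy
    exact h _ fun i => ⟨mem_of_mem_nhds hW, hy⟩
  refine ⟨univ, univ_mem, fun t ht => ?_⟩
  rw [hd t (fun _ => t 0) (fun i hi => by rw [Nat.le_zero.1 hi])]
  rcases (ht 0).2 with h | h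
  · exact key h1 _ h
  · exact key h2 _ h

theorem spl_id {K : Set X} {r : X → X} (h : IsRet K r) {t : ℕ → X} (ht : ∀ i, t i ∈ K) (i : ℕ) :
    spl id r i t = spl id id i t := by
  funext k; simp only [spl]; split_ifs <;> simp [h.1 _ (ht _)]

theorem IsRet.pb_eq {K : Set X} {r : X → X} (h : IsRet K r) {t : ℕ → X} (ht : ∀ i, t i ∈ K) (φ : Co X) :
    pb r φ t = φ t := by
  simp only [pb]; congr 1; funext k; exact h.1 _ (ht k)

variable [TopologicalSpace.PseudoMetrizableSpace X]

theorem mv1 (hA : IsClosed A) (hB : IsClosed B) {q : ℕ} {a α β : Co X} (ha : Coc (A ∪ B) (q + 1) a)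
    (dα : Deg q α) (hα : NZ A A (a + dl q α)) (dβ : Deg q β) (hβ : NZ B B (a + dl q β)) :
    ∃ θ, Deg q θ ∧ NZ (A ∩ B) (A ∪ B) (dl q θ) ∧ Cob (A ∪ B) (q + 1) (a + De A θ) ∧
      ∀ t : ℕ → X, (∀ i, t i ∈ A ∩ B) → θ t = α t + β t := by
  obtain ⟨r, hr⟩ := exists_ret hA
  obtain ⟨s, hs⟩ := exists_ret hB
  have h1 := taut hr (subset_union_left (t := B)) ha.1 (ha.2.mono subset_union_left subset_rfl)
    (γ := α) (by simpa using hα)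
  have h2 := taut hs (subset_union_right (s := A)) ha.1 (ha.2.mono subset_union_right subset_rfl)
    (γ := β) (by simpa using hβ)
  have d1 : Deg q (pb r α + pr (q + 1) id r a) := (dα.pb r).add (ha.1.pr _ _)
  have d2 : Deg q (pb s β + pr (q + 1) id s a) := (dβ.pb s).add (ha.1.pr _ _)
  have e : ∀ t : ℕ → X, (∀ i, t i ∈ A ∩ B) →
    (pb r α + pr (q + 1) id r a + (pb s β + pr (q + 1) id s a)) t = α t + β t := by
    intro t ht
    simp only [Pi.add_apply, pr]
    rw [hr.pb_eq (fun i => (ht i).1), hs.pb_eq (fun i => (ht i).2)]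
    simp only [spl_id hr (fun i => (ht i).1), spl_id hs (fun i => (ht i).2)]
    grind
  generalize pb r α + pr (q + 1) id r a = α' at *
  generalize pb s β + pr (q + 1) id s a = β' at *
  rw [d_succ] at h1 h2
  refine ⟨α' + β', d1.add d2, ?_, ⟨β' + cup 0 (ch A) (α' + β'), ?_, ?_⟩, e⟩
  · have h3 := (h1.mono (C' := A ∩ B) inter_subset_left subset_rfl).add (h2.mono (C' := A ∩ B) inter_subset_right subset_rfl)
    rw [dl_add]
    convert h3 using 1
    have := two0 (X := X); grind
  · exact d2.add (by simpa using (ch_deg A).cup (d1.add d2))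
  · have := nz_glue hA hB h1 h2
    convert this using 1
    rw [d_succ, dl_add, dl_ch_cup]
    have e2 : a + dl q α' + (a + dl q β') = dl q (α' + β') := by
      rw [dl_add]; have := two0 (X := X); grind
    rw [e2]
    have := two0 (X := X); grind

theorem mv2 (hA : IsClosed A) {p : ℕ} {θ : Co X} (hd : Deg p θ)
    (h : NZ (A ∩ B) (A ∪ B) (dl p θ)) (hc : Cob (A ∪ B) (p + 1) (De A θ)) :
    ∃ a b, Coc A p a ∧ Coc B p b ∧ ∀ t : ℕ → X, (∀ i, t i ∈ A ∩ B) → θ t = a t + b t := by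
  obtain ⟨ψ, dψ, hψ⟩ := hc
  rw [d_succ] at hψ
  refine ⟨ψ, ψ + cup 0 (ch A) θ, ⟨dψ, ?_⟩, ⟨Deg.add dψ (by simpa using (ch_deg A).cup hd), ?_⟩, ?_⟩
  · refine (hψ.mono subset_union_left subset_union_left).congr fun t ht => ?_
    simp [De_one ht]
  · rw [dl_add, dl_ch_cup, ← add_assoc, add_comm (dl p ψ)]
    refine (hψ.mono subset_union_right subset_union_right).add ?_
    intro x hx
    by_cases hxA : x ∈ A
    · exact ((h.mono subset_rfl subset_union_right).cupr _ _) x ⟨hxA, hx⟩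
    · exact ⟨Aᶜ, hA.isOpen_compl.mem_nhds hxA, fun t ht => by simp [cup, ch_zero fun i => (ht i).1]⟩
  · intro t ht
    rw [Pi.add_apply, ch_cup_one fun i => (ht i).1]
    have := z2 (ψ t); grind

theorem mv3 (hA : IsClosed A) (hB : IsClosed B) {p : ℕ} {a b : Co X} (ha : Coc A p a) (hb : Coc B p b)
    (hc : Cob (A ∩ B) p (a + b)) :
    ∃ x, Coc (A ∪ B) p x ∧ ∀ t : ℕ → X, (∀ i, t i ∈ A) → x t = a t := by
  obtain ⟨r, hr⟩ := exists_ret hA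
  obtain ⟨s, hs⟩ := exists_ret hB
  obtain ⟨u, hu⟩ := exists_ret (hA.inter hB)
  obtain ⟨γ, dγ, hγ⟩ := hc
  have h1 : NZ A (A ∪ B) (dl p (pb r a)) := by rw [dl_pb]; exact ha.2.pb (hr.near _)
  have h2 : NZ B (A ∪ B) (dl p (pb s b)) := by rw [dl_pb]; exact hb.2.pb (hs.near _)
  have hφ : Deg p (pb r a + pb s b) := (ha.1.pb r).add (hb.1.pb s)
  have h3 : NZ (A ∩ B) (A ∪ B) (dl p (pb r a + pb s b)) := by
    rw [dl_add]
    exact (h1.mono inter_subset_left subset_rfl).add (h2.mono inter_subset_right subset_rfl)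
  have h4 := taut hu (inter_subset_left.trans subset_union_left) hφ h3 (γ := γ)
    (hγ.congr fun t ht => by
      simp only [Pi.add_apply]
      rw [hr.pb_eq (fun i => (ht i).1), hs.pb_eq (fun i => (ht i).2)])
  have dγ' : Deg (p - 1) (pb u γ + pr p id u (pb r a + pb s b)) := (dγ.pb u).add (hφ.pr _ _)
  generalize pb u γ + pr p id u (pb r a + pb s b) = γ' at *
  refine ⟨pb s b + cup 0 (ch A) (pb r a + pb s b) + (if p = 0 then 0 else De A γ'), ⟨?_, ?_⟩, ?_⟩
  · refine ((hb.1.pb s).add (by simpa using (ch_deg A).cup hφ)).add ?_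
    split_ifs with hp
    · exact Deg.zero
    · have := De_deg (A := A) dγ'
      rwa [show p - 1 + 1 = p by omega] at this
  · have h5 := (nz_glue hA hB h1 h2).add (nz_De hA hB h4)
    convert h5 using 1
    rw [dl_add, dl_add, dl_ch_cup, De_add]
    have : dl p (if p = 0 then 0 else De A γ') = De A (d p γ') := by
      cases p with
      | zero => simp [dl_zero, De, cup_zero]
      | succ p => simp [dl_De]
    rw [this, dl_add]
    simp only [De_add]
    ring
  · intro t ht
    simp only [Pi.add_apply]
    rw [ch_cup_one ht, Pi.add_apply, hr.pb_eq ht]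
    have : (if p = 0 then 0 else De A γ') t = 0 := by
      split_ifs
      · rfl
      · exact De_one ht _
    rw [this]; grind

theorem prod_cob (hA : IsClosed A) (hB : IsClosed B) {p q : ℕ} {x y : Co X} (hx : Coc (A ∪ B) p x)
    (hy : Coc (A ∪ B) q y) (cx : Cob A p x) (cy : Cob B q y) : Cob (A ∪ B) (p + q) (cup p x y) := by
  obtain ⟨r, hr⟩ := exists_ret hA
  obtain ⟨s, hs⟩ := exists_ret hB
  obtain ⟨α, dα, hα⟩ := cx
  obtain ⟨β, dβ, hβ⟩ := cy
  have h1 := taut hr (subset_union_left (t := B)) hx.1 (hx.2.mono subset_union_left subset_rfl) hα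
  have h2 := taut hs (subset_union_right (s := A)) hy.1 (hy.2.mono subset_union_right subset_rfl) hβ
  have d1 : Deg (p - 1) (pb r α + pr p id r x) := (dα.pb r).add (hx.1.pr _ _)
  have d2 : Deg (q - 1) (pb s β + pr q id s y) := (dβ.pb s).add (hy.1.pr _ _)
  generalize pb r α + pr p id r x = α' at *
  generalize pb s β + pr q id s y = β' at *
  have c1 := cob_d_cup d1 hy
  have c2 := cob_cup_d (hx.add (Coc.d d1)) d2
  have c3 : Cob (A ∪ B) (p + q) (cup p (x + d p α') (y + d q β')) := by
    refine Cob.of_NZ fun z hz => ?_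
    rcases hz with hz | hz
    · exact (h1.cupl _ _) z hz
    · exact (h2.cupr _ _) z hz
  have := (c1.add c2).add c3
  convert this using 1
  simp only [cup_add, add_cup]
  have := two0 (X := X); grind

end top
end ASC
end

section
open Topology Set Filter

namespace ASC

variable {X Y Z : Type*} [TopologicalSpace X] [TopologicalSpace Y] [TopologicalSpace Z]

theorem Cob.symm {S : Set X} {p : ℕ} {φ ψ : Co X} (h : Cob S p (φ + ψ)) : Cob S p (ψ + φ) := by
  rwa [add_comm]

theorem Cob.refl {S : Set X} {p : ℕ} {φ : Co X} : Cob S p (φ + φ) := by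
  rw [co2]; exact Cob.of_NZ NZ.zero

theorem homot_step {A : Set X} {B : Set Y} (hA : IsCompact A) {H : ℝ → X → Y}
    (hH : ContinuousOn (fun z : ℝ × X => H z.1 z.2) (Icc 0 1 ×ˢ A))
    (hm : ∀ s ∈ Icc (0 : ℝ) 1, ∀ x ∈ A, H s x ∈ B) {p : ℕ} {φ : Co Y} (hφ : Coc B p φ)
    {τ : ℝ} (hτ : τ ∈ Icc (0 : ℝ) 1) :
    ∀ᶠ s in 𝓝[Icc 0 1] τ, Cob A p (pb (H τ) φ + pb (H s) φ) := by
  have key : ∀ᶠ s in 𝓝 τ, ∀ x ∈ A, s ∈ Icc (0 : ℝ) 1 → ∃ W ∈ 𝓝 x, ∀ t : ℕ → X, (∀ i, t i ∈ W ∩ A) →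
      pr (p + 1) (H τ) (H s) (dl p φ) t = 0 := by
    refine hA.eventually_forall_of_forall_eventually fun x hx => ?_
    obtain ⟨W, hW, h⟩ := hφ.2 (H τ x) (hm τ hτ x hx)
    have h1 := hH (τ, x) ⟨hτ, hx⟩ hW
    rw [Filter.mem_map] at h1
    obtain ⟨V, hV, hV'⟩ := mem_nhdsWithin_iff_exists_mem_nhds_inter.1 h1
    rw [nhds_prod_eq, Filter.mem_prod_iff] at hV
    obtain ⟨V1, hV1, V2, hV2, hV3⟩ := hV
    obtain ⟨V4, hV4, hV4o, hx4⟩ := mem_nhds_iff.1 hV2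
    filter_upwards [prod_mem_nhds hV1 (hV4o.mem_nhds hx4)]
    rintro ⟨s, y⟩ ⟨hs, hy⟩ hsI
    refine ⟨V4, hV4o.mem_nhds hy, fun t ht => Finset.sum_eq_zero fun k _ => h _ fun i => ?_⟩
    have hτ1 : τ ∈ V1 := mem_of_mem_nhds hV1
    have aux : ∀ s ∈ V1, s ∈ Icc (0 : ℝ) 1 → ∀ j, H s (t j) ∈ W ∩ B := by
      intro s hs hsI j
      exact ⟨hV' (show (s, t j) ∈ _ from ⟨hV3 ⟨hs, hV4 (ht j).1⟩, hsI, (ht j).2⟩), hm s hsI _ (ht j).2⟩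
    simp only [spl]
    split_ifs
    · exact aux τ hτ1 hτ _
    · exact aux s hs hsI _
  filter_upwards [mem_nhdsWithin_of_mem_nhds key, self_mem_nhdsWithin] with s hs hsI
  refine ⟨pr p (H τ) (H s) φ, hφ.1.pr _ _, ?_⟩
  rw [← prism p (H τ) (H s) φ hφ.1, add_assoc, co2, add_zero]
  exact fun x hx => hs x hx hsI

theorem homot {A : Set X} {B : Set Y} (hA : IsCompact A) {H : ℝ → X → Y}
    (hH : ContinuousOn (fun z : ℝ × X => H z.1 z.2) (Icc 0 1 ×ˢ A))
    (hm : ∀ s ∈ Icc (0 : ℝ) 1, ∀ x ∈ A, H s x ∈ B) {p : ℕ} {φ : Co Y} (hφ : Coc B p φ) :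
    Cob A p (pb (H 0) φ + pb (H 1) φ) := by
  refine isPreconnected_Icc.induction₂ (s := Icc (0 : ℝ) 1)
    (fun a b => Cob A p (pb (H a) φ + pb (H b) φ)) ?_ ?_ ?_ (by simp) (by simp)
  · exact fun x hx => homot_step hA hH hm hφ hx
  · exact fun x y z _ _ _ h h' => h.trans h'
  · exact fun x y _ _ h => h.symm

/-- if `A` deforms (through `A`) to a map into `C ⊆ A`, then `C`-coboundary implies `A`-coboundary. -/
theorem contr {A C : Set X} (hA : IsCompact A) {H : ℝ → X → X}
    (hH : ContinuousOn (fun z : ℝ × X => H z.1 z.2) (Icc 0 1 ×ˢ A))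
    (hm : ∀ s ∈ Icc (0 : ℝ) 1, ∀ x ∈ A, H s x ∈ A) (h0 : ∀ x ∈ A, H 0 x = x)
    (h1 : ∀ x ∈ A, H 1 x ∈ C) {p : ℕ} {φ : Co X} (hφ : Coc A p φ) (hc : Cob C p φ) : Cob A p φ := by
  have h := homot hA hH hm hφ
  have hc1 : ContinuousOn (H 1) A := by
    have : ContinuousOn (fun x => ((1 : ℝ), x)) A := by fun_prop
    exact hH.comp this fun x hx => ⟨by simp, hx⟩
  have h2 := hc.pb hc1 h1
  refine (h.of_add h2).congr fun t ht => ?_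
  simp only [pb]; congr 1; funext k; exact h0 _ (ht k)

/-- positive degree cocycles on a point -/
theorem cob_point {x : X} {p : ℕ} {φ : Co X} (hφ : Coc {x} (p + 1) φ) : Cob {x} (p + 1) φ := by
  obtain ⟨W, hW, h⟩ := hφ.2 x rfl
  have h1 := h (fun _ => x) fun i => ⟨mem_of_mem_nhds hW, rfl⟩
  have e : ∀ (c : ZMod 2) (q : ℕ), dl q (fun _ : ℕ → X => c) = fun _ => ((q + 2 : ℕ) : ZMod 2) * c := by
    intro c q; funext t; simp [dl]
  have hc : ∀ t : ℕ → X, (∀ i, t i ∈ ({x} : Set X)) → t = fun _ => x := fun t ht => funext ht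
  rcases Nat.even_or_odd p with hp | hp
  · refine Cob.of_NZ (NZ.of_eq fun t ht => ?_)
    rw [hc t ht]
    have : dl (p + 1) φ (fun _ => x) = ((p + 3 : ℕ) : ZMod 2) * φ (fun _ => x) := by
      simp only [dl, Function.comp_def]; simp; left; ring
    rw [this] at h1
    have h2 : ((p + 3 : ℕ) : ZMod 2) = 1 := by
      obtain ⟨k, rfl⟩ := hp
      push_cast; have := z2 (k : ZMod 2); rw [this]; rfl
    rw [h2, one_mul] at h1; exact h1
  · refine ⟨fun _ => φ (fun _ => x), fun _ _ _ => rfl, NZ.of_eq fun t ht => ?_⟩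
    rw [hc t ht, d_succ, e, Pi.add_apply]
    have h2 : ((p + 2 : ℕ) : ZMod 2) = 1 := by
      obtain ⟨k, rfl⟩ := hp
      push_cast; have := z2 (k : ZMod 2); rw [two_mul, this]; rfl
    rw [h2, one_mul, z2]

end ASC
end

section
open Topology Set Filter

namespace ASC

section gen
variable {X : Type*} [TopologicalSpace X] [TopologicalSpace.PseudoMetrizableSpace X] {A B : Set X}

theorem De_cob' (hA : IsClosed A) (hB : IsClosed B) {p : ℕ} {θ : Co X} (hd : Deg p θ)
    (h : NZ (A ∩ B) (A ∪ B) (dl p θ)) (hc : Cob (A ∩ B) p θ) : Cob (A ∪ B) (p + 1) (De A θ) := by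
  obtain ⟨r, hr⟩ := exists_ret (hA.inter hB)
  obtain ⟨γ, dγ, hγ⟩ := hc
  exact De_cob hA hB ((dγ.pb r).add (hd.pr _ _))
    (taut hr (inter_subset_left.trans subset_union_left) hd h hγ)

theorem De_cob_glob {S : Set X} {p : ℕ} {η : Co X} (h : Coc S p η) : Cob S (p + 1) (De A η) := by
  refine ⟨cup 0 (ch A) η, by simpa using (ch_deg A).cup h.1, ?_⟩
  rw [d_succ, dl_ch_cup, ← add_assoc, co2, zero_add]
  exact h.2.cupr _ _
end gen

section sph
variable {n : ℕ}

def Sp (k : Fin n) (a : ℕ) : Set (Fin n → ℝ) :=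
  {v | ∑ i, v i ^ 2 = 1 ∧ ∀ i : Fin n, (i.val < a ∨ k < i) → v i = 0}
def Dp (k a : Fin n) (ε : ℝ) : Set (Fin n → ℝ) := {v | v ∈ Sp k a ∧ 0 ≤ ε * v a}
noncomputable def nrm (u : Fin n → ℝ) : Fin n → ℝ := (√(∑ i, u i ^ 2))⁻¹ • u
def ee (k : Fin n) : Fin n → ℝ := Pi.single k 1

theorem Sp_closed (k : Fin n) (a : ℕ) : IsClosed (Sp k a) := by
  have : Sp k a = {v | ∑ i, v i ^ 2 = 1} ∩ ⋂ i : Fin n, ⋂ _ : (i.val < a ∨ k < i), {v | v i = 0} := by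
    ext v; simp [Sp]
  rw [this]
  refine (isClosed_eq (by fun_prop) (by fun_prop)).inter ?_
  exact isClosed_iInter fun i => isClosed_iInter fun _ => isClosed_eq (by fun_prop) (by fun_prop)

theorem Sp_compact (k : Fin n) (a : ℕ) : IsCompact (Sp k a) := by
  have h : IsCompact (Set.pi univ fun _ : Fin n => Set.Icc (-1 : ℝ) 1) := isCompact_univ_pi fun _ => isCompact_Icc
  refine h.of_isClosed_subset (Sp_closed k a) fun v hv i _ => ?_
  have : v i ^ 2 ≤ 1 := by
    rw [← hv.1]; exact Finset.single_le_sum (f := fun i => v i ^ 2) (fun j _ => sq_nonneg _) (Finset.mem_univ i)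
  exact abs_le.1 ((sq_le_one_iff_abs_le_one _).1 this)

theorem Dp_closed (k a : Fin n) (ε : ℝ) : IsClosed (Dp k a ε) :=
  (Sp_closed k a).inter (isClosed_le (f := fun _ : Fin n → ℝ => (0 : ℝ)) (g := fun v => ε * v a) (by fun_prop) (by fun_prop))

theorem Dp_compact (k a : Fin n) (ε : ℝ) : IsCompact (Dp k a ε) :=
  (Sp_compact k a).of_isClosed_subset (Dp_closed k a ε) fun _ h => h.1

theorem Sp_split (k a : Fin n) : Dp k a 1 ∪ Dp k a (-1) = Sp k a := by
  ext v
  simp only [Dp, mem_union, mem_setOf_eq]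
  constructor
  · rintro (h | h) <;> exact h.1
  · intro h
    rcases le_total 0 (v a) with h' | h'
    · left; exact ⟨h, by linarith⟩
    · right; exact ⟨h, by linarith⟩

theorem Sp_inter (k a : Fin n) : Dp k a 1 ∩ Dp k a (-1) = Sp k (a.val + 1) := by
  ext v
  simp only [Dp, mem_inter_iff, mem_setOf_eq, Sp]
  constructor
  · rintro ⟨⟨⟨h1, h2⟩, h3⟩, _, h4⟩
    refine ⟨h1, fun i hi => ?_⟩
    rcases hi with hi | hi
    · by_cases e : i = a
      · subst e; linarith
      · exact h2 i (Or.inl (by have := Fin.val_ne_of_ne e; omega))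
    · exact h2 i (Or.inr hi)
  · rintro ⟨h1, h2⟩
    have h3 : v a = 0 := h2 a (Or.inl (by omega))
    have h4 : ∀ i : Fin n, (i.val < a.val ∨ k < i) → v i = 0 := fun i hi => h2 i (hi.imp_left (by omega))
    exact ⟨⟨⟨h1, h4⟩, by simp [h3]⟩, ⟨h1, h4⟩, by simp [h3]⟩

theorem ee_mem (k : Fin n) {a : ℕ} (h : a ≤ k.val) : ee k ∈ Sp k a := by
  refine ⟨by simp [ee, Pi.single_apply], fun i hi => ?_⟩
  have : i ≠ k := by rintro rfl; rcases hi with hi | hi <;> [omega; exact lt_irrefl _ hi]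
  simp [ee, this]

theorem Sp_last (k : Fin n) {v : Fin n → ℝ} (h : v ∈ Sp k k) : v = ee k ∨ v = -ee k := by
  have h0 : ∀ i, i ≠ k → v i = 0 := fun i hi => h.2 i (by rcases lt_or_gt_of_ne hi with h | h <;> [exact Or.inl h; exact Or.inr h])
  have h1 : v k ^ 2 = 1 := by
    rw [← h.1]; symm; exact Finset.sum_eq_single k (fun i _ hi => by simp [h0 i hi]) (by simp)
  rcases (show v k = 1 ∨ v k = -1 from by simpa using h1) with h2 | h2
  · left; funext i; by_cases e : i = k
    · subst e; simp [ee, h2]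
    · simp [ee, e, h0 i e]
  · right; funext i; by_cases e : i = k
    · subst e; simp [ee, h2]
    · simp [ee, e, h0 i e]

theorem sumsq_pos {u : Fin n → ℝ} (h : u ≠ 0) : 0 < ∑ i, u i ^ 2 := by
  obtain ⟨i, hi⟩ := Function.ne_iff.1 h
  exact Finset.sum_pos' (fun _ _ => sq_nonneg _) ⟨i, Finset.mem_univ i, by simp at hi; positivity⟩

theorem nrm_unit {u : Fin n → ℝ} (h : u ≠ 0) : ∑ i, nrm u i ^ 2 = 1 := by
  have := sumsq_pos h
  simp only [nrm, Pi.smul_apply, smul_eq_mul, mul_pow, ← Finset.mul_sum, inv_pow, Real.sq_sqrt this.le]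
  exact inv_mul_cancel₀ this.ne'

theorem nrm_id {u : Fin n → ℝ} (h : ∑ i, u i ^ 2 = 1) : nrm u = u := by simp [nrm, h]

variable {M : Type*} [TopologicalSpace M]

theorem line {D : Set (Fin n → ℝ)} (hD : IsCompact D) {F : Set M} (hF : IsCompact F)
    {f g : (Fin n → ℝ) → Fin n → ℝ} (hf : ContinuousOn f D) (hg : ContinuousOn g D)
    (h : ∀ v ∈ D, ∀ t ∈ Icc (0 : ℝ) 1, (1 - t) • f v + t • g v ≠ 0 ∧ nrm ((1 - t) • f v + t • g v) ∈ D)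
    (uf : ∀ v ∈ D, ∑ i, f v i ^ 2 = 1) (ug : ∀ v ∈ D, ∑ i, g v i ^ 2 = 1) {p : ℕ}
    {φ : Co ((Fin n → ℝ) × M)} (hφ : Coc (D ×ˢ F) p φ) :
    Cob (D ×ˢ F) p (pb (fun x => (f x.1, x.2)) φ + pb (fun x => (g x.1, x.2)) φ) := by
  have := homot (hD.prod hF) (B := D ×ˢ F)
    (H := fun t x => (nrm ((1 - t) • f x.1 + t • g x.1), x.2)) ?_ ?_ hφ
  · refine this.congr fun t ht => ?_
    simp only [Pi.add_apply, pb]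
    congr 2 <;> funext k <;> simp [nrm_id (uf _ (ht k).1), nrm_id (ug _ (ht k).1)]
  · have c1 : ContinuousOn (fun z : ℝ × ((Fin n → ℝ) × M) => (1 - z.1) • f z.2.1 + z.1 • g z.2.1)
        (Icc 0 1 ×ˢ (D ×ˢ F)) := by
      have c2 : ContinuousOn (fun z : ℝ × ((Fin n → ℝ) × M) => f z.2.1) (Icc 0 1 ×ˢ (D ×ˢ F)) :=
        hf.comp (by fun_prop) fun z hz => hz.2.1
      have c3 : ContinuousOn (fun z : ℝ × ((Fin n → ℝ) × M) => g z.2.1) (Icc 0 1 ×ˢ (D ×ˢ F)) :=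
        hg.comp (by fun_prop) fun z hz => hz.2.1
      exact ContinuousOn.add (ContinuousOn.smul (f := fun z : ℝ × ((Fin n → ℝ) × M) => 1 - z.1) (by fun_prop) c2)
        (ContinuousOn.smul (f := fun z : ℝ × ((Fin n → ℝ) × M) => z.1) (by fun_prop) c3)
    refine ContinuousOn.prodMk ?_ (by fun_prop)
    refine ContinuousOn.smul (f := fun z : ℝ × ((Fin n → ℝ) × M) =>
      (√(∑ i, ((1 - z.1) • f z.2.1 + z.1 • g z.2.1) i ^ 2))⁻¹) (ContinuousOn.inv₀ ?_ ?_) c1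
    · refine Real.continuous_sqrt.comp_continuousOn ?_
      refine continuousOn_finset_sum _ fun i _ => ContinuousOn.pow ?_ 2
      exact (continuous_apply i).comp_continuousOn c1
    · intro z hz
      exact (Real.sqrt_pos.2 (sumsq_pos (h _ hz.2.1 _ hz.1).1)).ne'
  · exact fun s hs x hx => ⟨(h _ hx.1 _ hs).2, hx.2⟩

def piN (k : Fin n) (x : (Fin n → ℝ) × M) : (Fin n → ℝ) × M := (ee k, x.2)

theorem ee_mem_D {k a : Fin n} (h : a < k) {ε : ℝ} : ee k ∈ Dp k a ε :=
  ⟨ee_mem k h.le, by simp [ee, h.ne]⟩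

theorem Dcontr {k a : Fin n} (hak : a < k) {ε : ℝ} (hε : ε = 1 ∨ ε = -1) {F : Set M} (hF : IsCompact F)
    {p : ℕ} {φ : Co ((Fin n → ℝ) × M)} (hφ : Coc (Dp k a ε ×ˢ F) p φ) :
    Cob (Dp k a ε ×ˢ F) p (φ + pb (piN k) φ) := by
  have e2 : ε * ε = 1 := by rcases hε with rfl | rfl <;> norm_num
  have hs : ∀ u : Fin n → ℝ, u ≠ 0 → (∀ i : Fin n, (i.val < a.val ∨ k < i) → u i = 0) → 0 ≤ ε * u a →
      nrm u ∈ Dp k a ε := by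
    intro u h0 h1 h2
    refine ⟨⟨nrm_unit h0, fun i hi => by simp [nrm, h1 i hi]⟩, ?_⟩
    simp only [nrm, Pi.smul_apply, smul_eq_mul]
    rw [mul_left_comm]
    positivity
  have hz : ∀ i : Fin n, (i.val < a.val ∨ k < i) → i ≠ a ∧ i ≠ k := by
    intro i hi
    constructor
    · rintro rfl; rcases hi with hi | hi
      · omega
      · exact lt_asymm hi hak
    · rintro rfl; rcases hi with hi | hi
      · exact lt_asymm hi hak
      · exact lt_irrefl _ hi
  have s1 := line (Dp_compact k a ε) hF (f := id) (g := fun _ => ε • ee a) (by fun_prop) (by fun_prop) (by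
    intro v hv t ht
    have ha : ((1 - t) • id v + t • (ε • ee a)) a = (1 - t) * v a + t * ε := by simp [ee]
    have hp : 0 ≤ ε * (((1 - t) • id v + t • (ε • ee a)) a) := by
      rw [ha]
      have : ε * ((1 - t) * v a + t * ε) = (1 - t) * (ε * v a) + t := by linear_combination t * e2
      rw [this]
      have := mul_nonneg (sub_nonneg.2 ht.2) hv.2
      linarith [ht.1]
    have hne : (1 - t) • id v + t • (ε • ee a) ≠ 0 := by
      intro h0
      have h1 := congrFun h0 a
      rw [ha] at h1
      have h2 : (1 - t) * (ε * v a) + t = 0 := by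
        have : ε * ((1 - t) * v a + t * ε) = 0 := by rw [h1]; simp
        linear_combination this - t * e2
      have := mul_nonneg (sub_nonneg.2 ht.2) hv.2
      have ht0 : t = 0 := by linarith [ht.1]
      subst ht0
      have h3 : v = 0 := by simpa using h0
      have := hv.1.1; rw [h3] at this; simp at this
    refine ⟨hne, hs _ hne ?_ hp⟩
    intro i hi
    simp [ee, (hz i hi).1, hv.1.2 i hi]) (fun v hv => hv.1.1)
    (fun v _ => by simp [ee, Pi.single_apply, pow_two, e2]) hφ
  have s2 := line (Dp_compact k a ε) hF (f := fun _ => ε • ee a) (g := fun _ => ee k) (by fun_prop) (by fun_prop) (by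
    intro v hv t ht
    have ha : ((1 - t) • (ε • ee a) + t • ee k) a = (1 - t) * ε := by simp [ee, hak.ne]
    have hk : ((1 - t) • (ε • ee a) + t • ee k) k = t := by simp [ee, hak.ne']
    have hne : (1 - t) • (ε • ee a) + t • ee k ≠ 0 := by
      intro h0
      rw [h0] at ha hk
      have : t = 0 := by simpa using hk.symm
      subst this
      have : ε = 0 := by simpa using ha.symm
      rw [this] at e2; simp at e2
    refine ⟨hne, hs _ hne ?_ ?_⟩
    · intro i hi
      simp [ee, (hz i hi).1, (hz i hi).2]
    · rw [ha, mul_left_comm, e2]; linarith [ht.2])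
    (fun v _ => by simp [ee, Pi.single_apply, pow_two, e2])
    (fun v _ => by simp [ee, Pi.single_apply]) hφ
  exact s1.trans s2
end sph
end ASC
end

section
open Topology Set Filter

namespace ASC
section sph
variable {n : ℕ} {M : Type*} [TopologicalSpace M] [TopologicalSpace.PseudoMetrizableSpace M]

def anti (x : (Fin n → ℝ) × M) : (Fin n → ℝ) × M := (-x.1, x.2)

theorem anti_cont : Continuous (anti : (Fin n → ℝ) × M → _) := by unfold anti; fun_prop
theorem piN_cont (k : Fin n) : Continuous (piN k : (Fin n → ℝ) × M → _) := by unfold piN; fun_prop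

theorem anti_D {k a : Fin n} {F : Set M} :
    MapsTo anti (Dp k a (-1) ×ˢ F) (Dp k a 1 ×ˢ F) := by
  rintro ⟨v, b⟩ ⟨⟨hv, h⟩, hb⟩
  refine ⟨⟨⟨by simpa [anti] using hv.1, fun i hi => by simpa [anti] using hv.2 i hi⟩, ?_⟩, hb⟩
  simp [anti] at *; linarith

theorem anti_S {k : Fin n} {a : ℕ} {F : Set M} :
    MapsTo anti (Sp k a ×ˢ F) (Sp k a ×ˢ F) := by
  rintro ⟨v, b⟩ ⟨hv, hb⟩
  exact ⟨⟨by simpa [anti] using hv.1, fun i hi => by simpa [anti] using hv.2 i hi⟩, hb⟩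

theorem anti_anti (x : (Fin n → ℝ) × M) : anti (anti x) = x := by simp [anti]

/-- cobounding on a hemisphere -/
theorem Dcob {k a : Fin n} (hak : a < k) {ε : ℝ} (hε : ε = 1 ∨ ε = -1) {F : Set M} (hF : IsCompact F)
    {p : ℕ} {φ : Co ((Fin n → ℝ) × M)} (hφ : Coc (Dp k a ε ×ˢ F) p φ) (hc : Cob ({ee k} ×ˢ F) p φ) :
    Cob (Dp k a ε ×ˢ F) p φ :=
  (Dcontr hak hε hF hφ).of_add (hc.pb (piN_cont k).continuousOn fun x hx => ⟨rfl, hx.2⟩)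

theorem prod_split (k a : Fin n) (F : Set M) : Dp k a 1 ×ˢ F ∪ Dp k a (-1) ×ˢ F = Sp k a ×ˢ F := by
  rw [← Set.union_prod, Sp_split]
theorem prod_inter' (k a : Fin n) (F : Set M) :
    Dp k a 1 ×ˢ F ∩ Dp k a (-1) ×ˢ F = Sp k (a.val + 1) ×ˢ F := by
  rw [← Set.inter_prod, Sp_inter]

theorem inv_cob (k : Fin n) {F : Set M} (hF : IsCompact F) (hFc : IsClosed F) (j : ℕ) :
    ∀ a, a + j = k.val → ∀ q ≤ j, ∀ c : Co ((Fin n → ℝ) × M), Coc (Sp k a ×ˢ F) q c →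
    (∀ t : ℕ → _, (∀ i, t i ∈ Sp k a ×ˢ F) → c (anti ∘ t) = c t) → Cob ({ee k} ×ˢ F) q c →
    Cob (Sp k a ×ˢ F) q c := by
  induction j with
  | zero =>
    intro a ha q hq c hc hi hN
    obtain rfl : q = 0 := by omega
    obtain rfl : a = k.val := by omega
    obtain ⟨β, -, hβ⟩ := hN
    have hN : ∀ b ∈ F, c (fun _ => (ee k, b)) = 0 := by
      intro b hb
      obtain ⟨W, hW, h⟩ := hβ (ee k, b) ⟨rfl, hb⟩
      simpa using h (fun _ => (ee k, b)) fun i => ⟨mem_of_mem_nhds hW, rfl, hb⟩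
    refine Cob.of_NZ (NZ.of_eq fun t ht => ?_)
    rw [hc.1 t (fun _ => t 0) fun i hi => by rw [Nat.le_zero.1 hi]]
    have h0 := ht 0
    generalize t 0 = x at h0
    obtain ⟨v, b⟩ := x
    rcases Sp_last k h0.1 with h | h
    · simp only at h; subst h; exact hN b h0.2
    · rw [← hi (fun _ => (v, b)) (fun _ => h0)]
      simp only at h; subst h
      have : (anti ∘ fun _ : ℕ => (-ee k, b)) = fun _ => (ee k, b) := by funext i; simp [anti]
      rw [this]; exact hN b h0.2
  | succ j ih =>
    intro a ha q hq c hc hi hN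
    obtain ⟨a, rfl⟩ : ∃ a' : Fin n, a'.val = a := ⟨⟨a, by omega⟩, rfl⟩
    have hak : a < k := by rw [Fin.lt_def]; omega
    have hA : IsClosed (Dp k a 1 ×ˢ F) := (Dp_closed k a 1).prod hFc
    have hB : IsClosed (Dp k a (-1) ×ˢ F) := (Dp_closed k a (-1)).prod hFc
    have eS := prod_split k a F
    have eK := prod_inter' k a F
    have cA := Dcob hak (Or.inl rfl) hF (hc.mono (by rw [← eS]; exact subset_union_left)) hN
    have cB := Dcob hak (Or.inr rfl) hF (hc.mono (by rw [← eS]; exact subset_union_right)) hN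
    cases q with
    | zero =>
      obtain ⟨β, -, hβ⟩ := cA
      obtain ⟨β', -, hβ'⟩ := cB
      rw [← eS]
      exact Cob.of_NZ (mv1_zero hc.1 (by simpa using hβ) (by simpa using hβ'))
    | succ r =>
      obtain ⟨β, dβ, hβ⟩ := cA
      rw [d_succ] at hβ
      have hβ' : NZ (Dp k a (-1) ×ˢ F) (Dp k a (-1) ×ˢ F) (c + dl r (pb anti β)) := by
        refine (hβ.pb (Near.of_cont anti_cont.continuousOn anti_D)).congr fun t ht => ?_
        simp only [pb_add, Pi.add_apply, dl_pb]
        congr 1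
        exact hi t fun i => by rw [← eS]; exact Or.inr (ht i)
      rw [← eS] at hc
      obtain ⟨θ, dθ, hθ, hcob, he⟩ := mv1 hA hB hc dβ hβ (dβ.pb anti) hβ'
      have hθK : Coc (Sp k (a.val + 1) ×ˢ F) r θ :=
        ⟨dθ, by rw [← eK]; exact hθ.mono subset_rfl (inter_subset_left.trans subset_union_left)⟩
      have hN' : MapsTo (piN k) (Sp k a ×ˢ F) (Sp k (a.val + 1) ×ˢ F) :=
        fun x hx => ⟨ee_mem k (by omega), hx.2⟩
      have hπ : Coc (Sp k a ×ˢ F) r (pb (piN k) θ) := hθK.pb (piN_cont k).continuousOn hN'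
      have sub : Sp k (a.val + 1) ×ˢ F ⊆ Sp k a ×ˢ F := by
        rw [← eK, ← eS]; exact inter_subset_left.trans subset_union_left
      have h0 : Cob (Sp k (a.val + 1) ×ˢ F) r (θ + pb (piN k) θ) := by
        refine ih (a.val + 1) (by omega) r (by omega) _ (hθK.add (hπ.mono sub)) ?_ ?_
        · intro t ht
          have e1 : θ (anti ∘ t) = θ t := by
            rw [he _ fun i => ?_, he t fun i => by rw [eK]; exact ht i]
            · simp only [pb]
              have : anti ∘ anti ∘ t = t := by funext i; simp [anti_anti]
              rw [this, add_comm]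
            · rw [eK]; exact anti_S (ht i)
          simp only [Pi.add_apply, e1, pb]
          rfl
        · refine Cob.of_NZ (NZ.of_eq fun t ht => ?_)
          have : piN k ∘ t = t := by
            funext i
            have := (ht i).1
            simp only [Function.comp, piN]
            rw [← show (t i).1 = ee k from this]
          simp only [Pi.add_apply, pb, this, z2]
      have h1 : Cob (Sp k a ×ˢ F) (r + 1) (De (Dp k a 1 ×ˢ F) (θ + pb (piN k) θ)) := by
        rw [← eS]
        refine De_cob' hA hB (dθ.add hπ.1) ?_ (by rw [eK]; exact h0)
        rw [dl_add]
        refine hθ.add (hπ.2.mono ?_ ?_)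
        · rw [eK]; exact sub
        · rw [eS]
      have h2 := De_cob_glob (A := Dp k a 1 ×ˢ F) hπ
      rw [eS] at hcob
      rw [De_add] at h1
      exact hcob.of_add (h1.of_add h2)

theorem sph_class (k : Fin n) {F : Set M} (hF : IsCompact F) (hFc : IsClosed F) (j : ℕ) :
    ∀ a, a + j = k.val → ∃ s : Co ((Fin n → ℝ) × M), Coc (Sp k a ×ˢ F) j s ∧
      (∀ t : ℕ → _, (∀ i, t i ∈ ({ee k} : Set (Fin n → ℝ)) ×ˢ F) → s t = 0) ∧
      ∀ q z, Coc F q z → Cob (Sp k a ×ˢ F) (j + q) (cup j s (pb Prod.snd z)) → Cob F q z := by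
  induction j with
  | zero =>
    intro a ha
    obtain rfl : a = k.val := by omega
    let N : Set ((Fin n → ℝ) × M) := {x | x.1 k < 0}
    refine ⟨ch N, ⟨ch_deg _, ?_⟩, ?_, ?_⟩
    · rintro ⟨v, b⟩ ⟨hv, hb⟩
      rcases Sp_last k hv with h | h
      · simp only at h; subst h
        refine ⟨{x | 0 < x.1 k}, (isOpen_lt (by fun_prop) (by fun_prop)).mem_nhds (by simp [ee]), fun t ht => dch_zero fun i => ?_⟩
        have := (ht i).1
        simp only [N, mem_setOf_eq] at *; linarith
      · simp only at h; subst h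
        refine ⟨{x | x.1 k < 0}, (isOpen_lt (by fun_prop) (by fun_prop)).mem_nhds (by simp [ee]), fun t ht => dch_one fun i => ?_⟩
        exact (ht i).1
    · intro t ht
      refine ch_zero fun i => ?_
      have : (t i).1 = ee k := (ht i).1
      simp [N, this, ee]
    · intro q z hz hc
      have := hc.pb (f := fun b : M => (-ee k, b)) (S := F) (by fun_prop) fun b hb =>
        ⟨⟨by simp [ee, Pi.single_apply], fun i hi => ?_⟩, hb⟩
      · rw [zero_add] at this
        refine this.congr fun t ht => ?_
        simp only [pb, cup]
        rw [ch_one, one_mul]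
        · rfl
        · intro i; simp [N, ee]
      · have : i ≠ k := by rintro rfl; rcases hi with hi | hi <;> [omega; exact lt_irrefl _ hi]
        simp [ee, this]
  | succ j ih =>
    intro a ha
    obtain ⟨a, rfl⟩ : ∃ a' : Fin n, a'.val = a := ⟨⟨a, by omega⟩, rfl⟩
    have hak : a < k := by rw [Fin.lt_def]; omega
    have hA : IsClosed (Dp k a 1 ×ˢ F) := (Dp_closed k a 1).prod hFc
    have hB : IsClosed (Dp k a (-1) ×ˢ F) := (Dp_closed k a (-1)).prod hFc
    have eS := prod_split k a F
    have eK := prod_inter' k a F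
    obtain ⟨s, hs, hs0, hsz⟩ := ih (a.val + 1) (by omega)
    obtain ⟨r, hr⟩ := exists_ret (hA.inter hB)
    have hNK : ({ee k} : Set (Fin n → ℝ)) ×ˢ F ⊆ Dp k a 1 ×ˢ F ∩ Dp k a (-1) ×ˢ F := by
      rw [eK]; rintro ⟨v, b⟩ ⟨hv, hb⟩
      exact ⟨by rw [show v = ee k from hv]; exact ee_mem k (by omega), hb⟩
    have hrs : NZ (Dp k a 1 ×ˢ F ∩ Dp k a (-1) ×ˢ F) (Dp k a 1 ×ˢ F ∪ Dp k a (-1) ×ˢ F) (dl j (pb r s)) := by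
      rw [dl_pb]; refine NZ.pb ?_ (hr.near _); rw [eK]; exact hs.2
    refine ⟨De (Dp k a 1 ×ˢ F) (pb r s), ?_, ?_, ?_⟩
    · rw [← eS]
      exact De_coc hA hB (hs.1.pb r) hrs
    · intro t ht
      exact De_one (fun i => (hNK (ht i)).1) _
    · intro q z hz hc
      rw [De_cup] at hc
      have hz' : Coc (Dp k a 1 ×ˢ F ∪ Dp k a (-1) ×ˢ F) q (pb (Prod.snd : (Fin n → ℝ) × M → M) z) := by
        rw [eS]; exact hz.pb continuous_snd.continuousOn fun x hx => hx.2
      have hd : Deg (j + q) (cup j (pb r s) (pb Prod.snd z)) := (hs.1.pb r).cup (hz.1.pb _)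
      rw [← eS, show j + 1 + q = j + q + 1 by ring] at hc
      obtain ⟨x, y, hx, hy, hxy⟩ := mv2 hA hd (by
        rw [dl_cup j q _ _ (hs.1.pb r)]
        exact (hrs.cupl _ _).add ((hz'.2.mono (inter_subset_left.trans subset_union_left) subset_rfl).cupr _ _)) hc
      refine hsz q z hz ?_
      have c1 := (Dcontr hak (Or.inl rfl) hF hx).mono (S' := Sp k (a.val + 1) ×ˢ F) (by rw [← eK]; exact inter_subset_left)
      have c2 := (Dcontr hak (Or.inr rfl) hF hy).mono (S' := Sp k (a.val + 1) ×ˢ F) (by rw [← eK]; exact inter_subset_right)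
      refine (c1.add c2).congr fun t ht => ?_
      have ht' : ∀ i, t i ∈ Dp k a 1 ×ˢ F ∩ Dp k a (-1) ×ˢ F := by rw [eK]; exact ht
      have e1 := hxy t ht'
      have hN : ∀ i, (piN k ∘ t) i ∈ ({ee k} : Set (Fin n → ℝ)) ×ˢ F := fun i => ⟨rfl, (ht i).2⟩
      have e2 := hxy (piN k ∘ t) fun i => hNK (hN i)
      have e3 : r ∘ t = t := by funext i; exact hr.1 _ (ht' i)
      have e4 : r ∘ (piN k ∘ t) = piN k ∘ t := by funext i; exact hr.1 _ (hNK (hN i))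
      have e5 : cup j s (pb Prod.snd z) t = x t + y t := by
        rw [← e1]; simp only [cup, pb, e3]
      have e6 : x (piN k ∘ t) + y (piN k ∘ t) = 0 := by
        rw [← e2]; simp only [cup, pb, e4, hs0 _ hN, zero_mul]
      rw [e5]
      simp only [Pi.add_apply, pb]
      grind

theorem cob_slice (v : Fin n → ℝ) {F : Set M} {q : ℕ} (h : ∀ z, Coc F q z → Cob F q z)
    {c : Co ((Fin n → ℝ) × M)} (hc : Coc ({v} ×ˢ F) q c) : Cob ({v} ×ˢ F) q c := by
  have h1 := h _ (hc.pb (f := fun b : M => (v, b)) (S := F) (by fun_prop) fun b hb => ⟨rfl, hb⟩)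
  refine (h1.pb (f := Prod.snd) (S := {v} ×ˢ F) (by fun_prop) fun x hx => hx.2).congr fun t ht => ?_
  simp only [pb]; congr 1; funext i
  simp only [Function.comp]; rw [← show (t i).1 = v from (ht i).1]

theorem sph_van (k : Fin n) {F : Set M} (hF : IsCompact F) (hFc : IsClosed F) {D : ℕ}
    (hD : ∀ q, D < q → ∀ z, Coc F q z → Cob F q z) (j : ℕ) :
    ∀ a, a + j = k.val → ∀ q, D + j < q → ∀ c : Co ((Fin n → ℝ) × M), Coc (Sp k a ×ˢ F) q c →
      Cob (Sp k a ×ˢ F) q c := by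
  induction j with
  | zero =>
    intro a ha q hq c hc
    obtain rfl : a = k.val := by omega
    have hA : IsClosed (({ee k} : Set (Fin n → ℝ)) ×ˢ F) := isClosed_singleton.prod hFc
    have hB : IsClosed (({-ee k} : Set (Fin n → ℝ)) ×ˢ F) := isClosed_singleton.prod hFc
    have sub : Sp k k ×ˢ F ⊆ ({ee k} : Set (Fin n → ℝ)) ×ˢ F ∪ ({-ee k} : Set (Fin n → ℝ)) ×ˢ F := by
      rintro ⟨v, b⟩ ⟨hv, hb⟩
      rcases Sp_last k hv with h | h
      · exact Or.inl ⟨h, hb⟩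
      · exact Or.inr ⟨h, hb⟩
    have sub' : ({ee k} : Set (Fin n → ℝ)) ×ˢ F ∪ ({-ee k} : Set (Fin n → ℝ)) ×ˢ F ⊆ Sp k k ×ˢ F := by
      rintro ⟨v, b⟩ (⟨hv, hb⟩ | ⟨hv, hb⟩)
      · rw [show v = ee k from hv]; exact ⟨ee_mem k le_rfl, hb⟩
      · rw [show v = -ee k from hv]; exact anti_S (F := F) (x := (ee k, b)) ⟨ee_mem k le_rfl, hb⟩
    have eS := sub.antisymm sub'
    rw [eS] at hc ⊢
    obtain ⟨r, rfl⟩ : ∃ r, q = r + 1 := ⟨q - 1, by omega⟩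
    obtain ⟨α, dα, hα⟩ := cob_slice (ee k) (hD _ (by omega)) (hc.mono subset_union_left)
    obtain ⟨β, dβ, hβ⟩ := cob_slice (-ee k) (hD _ (by omega)) (hc.mono subset_union_right)
    obtain ⟨θ, dθ, hθ, hcob, he⟩ := mv1 hA hB hc dα (by simpa using hα) dβ (by simpa using hβ)
    refine hcob.of_add (Cob.of_NZ (nz_De hA hB ?_))
    rintro ⟨v, b⟩ ⟨h1, h2⟩
    have h1 : v = ee k := h1.1
    have h2 : v = -ee k := h2.1
    exfalso
    have := congrFun (h1.symm.trans h2) k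
    simp [ee] at this; linarith
  | succ j ih =>
    intro a ha q hq c hc
    obtain ⟨a, rfl⟩ : ∃ a' : Fin n, a'.val = a := ⟨⟨a, by omega⟩, rfl⟩
    have hak : a < k := by rw [Fin.lt_def]; omega
    have hA : IsClosed (Dp k a 1 ×ˢ F) := (Dp_closed k a 1).prod hFc
    have hB : IsClosed (Dp k a (-1) ×ˢ F) := (Dp_closed k a (-1)).prod hFc
    have eS := prod_split k a F
    have eK := prod_inter' k a F
    obtain ⟨r, rfl⟩ : ∃ r, q = r + 1 := ⟨q - 1, by omega⟩
    have hN : Cob ({ee k} ×ˢ F) (r + 1) c := by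
      refine cob_slice _ (hD _ (by omega)) (hc.mono ?_)
      rintro ⟨v, b⟩ ⟨hv, hb⟩
      rw [show v = ee k from hv]; exact ⟨ee_mem k (by omega), hb⟩
    obtain ⟨α, dα, hα⟩ := Dcob hak (Or.inl rfl) hF (hc.mono (by rw [← eS]; exact subset_union_left)) hN
    obtain ⟨β, dβ, hβ⟩ := Dcob hak (Or.inr rfl) hF (hc.mono (by rw [← eS]; exact subset_union_right)) hN
    rw [← eS] at hc ⊢
    obtain ⟨θ, dθ, hθ, hcob, he⟩ := mv1 hA hB hc dα (by simpa using hα) dβ (by simpa using hβ)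
    refine hcob.of_add (De_cob' hA hB dθ hθ ?_)
    rw [eK]
    refine ih (a.val + 1) (by omega) r (by omega) θ ⟨dθ, ?_⟩
    rw [← eK]; exact hθ.mono subset_rfl (inter_subset_left.trans subset_union_left)

end sph
end ASC
end

section
open Topology Set Filter

namespace ASC
section so
open Matrix
variable {n : ℕ}

instance instPMSMatrix : TopologicalSpace.PseudoMetrizableSpace (Matrix (Fin n) (Fin n) ℝ) :=
  inferInstanceAs (TopologicalSpace.PseudoMetrizableSpace (Fin n → Fin n → ℝ))

theorem mat_ext {A B : Matrix (Fin n) (Fin n) ℝ} (h : ∀ x, A *ᵥ x = B *ᵥ x) : A = B := by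
  ext i j
  have := congrFun (h (Pi.single j 1)) i
  simpa using this

noncomputable def rf (u : Fin n → ℝ) : Matrix (Fin n) (Fin n) ℝ := 1 - (2 / (u ⬝ᵥ u)) • vecMulVec u u

theorem rf_mulVec (u x : Fin n → ℝ) : rf u *ᵥ x = x - (2 * (u ⬝ᵥ x) / (u ⬝ᵥ u)) • u := by
  rw [rf, sub_mulVec, one_mulVec, smul_mulVec, vecMulVec_mulVec]
  ext i; simp; ring

theorem rf_T (u : Fin n → ℝ) : (rf u)ᵀ = rf u := by
  simp [rf, transpose_sub, transpose_vecMulVec]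

theorem rf_sq {u : Fin n → ℝ} (h : u ⬝ᵥ u ≠ 0) : rf u * rf u = 1 := by
  refine mat_ext fun x => ?_
  rw [← mulVec_mulVec, rf_mulVec, rf_mulVec, one_mulVec]
  ext i
  simp only [Pi.sub_apply, Pi.smul_apply, smul_eq_mul, dotProduct_sub, dotProduct_smul]
  field_simp; ring

theorem rf_det {u : Fin n → ℝ} (h : u ⬝ᵥ u ≠ 0) : (rf u).det = -1 := by
  have : rf u = 1 + replicateCol Unit (-(2 / (u ⬝ᵥ u)) • u) * replicateRow Unit u := by
    rw [← vecMulVec_eq, rf, smul_vecMulVec, sub_eq_add_neg, neg_smul]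
  rw [this, det_one_add_replicateCol_mul_replicateRow, dotProduct_smul, smul_eq_mul]
  field_simp; ring

noncomputable def Rm (v w : Fin n → ℝ) : Matrix (Fin n) (Fin n) ℝ := rf (v + w) * rf v

variable {v w : Fin n → ℝ}

theorem vw_dot (hv : v ⬝ᵥ v = 1) (hw : w ⬝ᵥ w = 1) : (v + w) ⬝ᵥ (v + w) = 2 * (1 + v ⬝ᵥ w) := by
  simp only [add_dotProduct, dotProduct_add, hv, hw, dotProduct_comm w v]; ring

theorem vw_ne (hv : v ⬝ᵥ v = 1) (hw : w ⬝ᵥ w = 1) (h : 1 + v ⬝ᵥ w ≠ 0) : (v + w) ⬝ᵥ (v + w) ≠ 0 := by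
  rw [vw_dot hv hw]; simpa using h

theorem Rm_mulVec (hv : v ⬝ᵥ v = 1) (hw : w ⬝ᵥ w = 1) (h : 1 + v ⬝ᵥ w ≠ 0) (x : Fin n → ℝ) :
    Rm v w *ᵥ x = x - (((v + w) ⬝ᵥ x) / (1 + v ⬝ᵥ w)) • (v + w) + (2 * (v ⬝ᵥ x)) • w := by
  rw [Rm, ← mulVec_mulVec, rf_mulVec, rf_mulVec, vw_dot hv hw]
  ext i
  simp only [Pi.sub_apply, Pi.add_apply, Pi.smul_apply, smul_eq_mul, dotProduct_sub, dotProduct_smul,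
    add_dotProduct, hv, dotProduct_comm w v]
  field_simp; ring

theorem Rm_orth (hv : v ⬝ᵥ v = 1) (hw : w ⬝ᵥ w = 1) (h : 1 + v ⬝ᵥ w ≠ 0) : (Rm v w)ᵀ * Rm v w = 1 := by
  rw [Rm, transpose_mul, rf_T, rf_T, Matrix.mul_assoc, ← Matrix.mul_assoc (rf (v + w)), rf_sq, Matrix.one_mul,
    rf_sq (by rw [hv]; norm_num)]
  exact vw_ne hv hw h

theorem Rm_det (hv : v ⬝ᵥ v = 1) (hw : w ⬝ᵥ w = 1) (h : 1 + v ⬝ᵥ w ≠ 0) : (Rm v w).det = 1 := by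
  rw [Rm, det_mul, rf_det (vw_ne hv hw h), rf_det (by rw [hv]; norm_num)]; norm_num

theorem Rm_apply (hv : v ⬝ᵥ v = 1) (hw : w ⬝ᵥ w = 1) (h : 1 + v ⬝ᵥ w ≠ 0) : Rm v w *ᵥ v = w := by
  rw [Rm_mulVec hv hw h]
  ext i
  simp only [Pi.sub_apply, Pi.add_apply, Pi.smul_apply, smul_eq_mul, add_dotProduct, hv, dotProduct_comm w v]
  field_simp; ring

theorem Rm_inv (hv : v ⬝ᵥ v = 1) (hw : w ⬝ᵥ w = 1) (h : 1 + v ⬝ᵥ w ≠ 0) : Rm w v * Rm v w = 1 := by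
  refine mat_ext fun x => ?_
  rw [← mulVec_mulVec, Rm_mulVec hv hw h, Rm_mulVec hw hv (by rwa [dotProduct_comm]), one_mulVec]
  ext i
  simp only [Pi.sub_apply, Pi.add_apply, Pi.smul_apply, smul_eq_mul, add_dotProduct, dotProduct_add,
    dotProduct_sub, dotProduct_smul, hv, hw, dotProduct_comm w v]
  field_simp; ring

theorem Rm_self (hv : v ⬝ᵥ v = 1) : Rm v v = 1 := by
  refine mat_ext fun x => ?_
  rw [Rm_mulVec hv hv (by rw [hv]; norm_num), one_mulVec, hv]
  ext i
  simp only [Pi.sub_apply, Pi.add_apply, Pi.smul_apply, smul_eq_mul, add_dotProduct]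
  ring

/-- the square of the quarter turn is even in `v` -/
theorem Rm_even (hv : v ⬝ᵥ v = 1) (hw : w ⬝ᵥ w = 1) (h : v ⬝ᵥ w = 0) (x : Fin n → ℝ) :
    (Rm v (-w) * Rm w v) *ᵥ x = x - (2 * (w ⬝ᵥ x)) • w - (2 * (v ⬝ᵥ x)) • v := by
  have h' : w ⬝ᵥ v = 0 := by rwa [dotProduct_comm]
  rw [← mulVec_mulVec, Rm_mulVec hv (by simpa using hw) (by simp [h]), Rm_mulVec hw hv (by simp [h'])]
  ext i
  simp only [Pi.sub_apply, Pi.add_apply, Pi.smul_apply, Pi.neg_apply, smul_eq_mul, add_dotProduct, dotProduct_add,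
    dotProduct_sub, dotProduct_smul, neg_dotProduct, dotProduct_neg, hv, hw, h, h']
  field_simp; ring

theorem Rm_even' (hv : v ⬝ᵥ v = 1) (hw : w ⬝ᵥ w = 1) (h : v ⬝ᵥ w = 0) :
    Rm (-v) (-w) * Rm w (-v) = Rm v (-w) * Rm w v := by
  refine mat_ext fun x => ?_
  rw [Rm_even hv hw h, Rm_even (by simpa using hv) hw (by simpa using h)]
  simp

theorem Rm_fix {i : Fin n} (h1 : v i = 0) (h2 : w i = 0) : Rm v w *ᵥ ee i = ee i := by
  rw [Rm, ← mulVec_mulVec, rf_mulVec]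
  simp only [ee, dotProduct_single, h1, mul_one, mul_zero, zero_div, zero_smul, sub_zero]
  rw [rf_mulVec]
  simp [h1, h2]

theorem Rm_cont {Z : Type*} [TopologicalSpace Z] {S : Set Z} {f g : Z → Fin n → ℝ} (hf : ContinuousOn f S)
    (hg : ContinuousOn g S) (uf : ∀ z ∈ S, f z ⬝ᵥ f z = 1) (ug : ∀ z ∈ S, g z ⬝ᵥ g z = 1)
    (h : ∀ z ∈ S, 1 + f z ⬝ᵥ g z ≠ 0) : ContinuousOn (fun z => Rm (f z) (g z)) S := by
  have key : ∀ u : Z → Fin n → ℝ, ContinuousOn u S → (∀ z ∈ S, u z ⬝ᵥ u z ≠ 0) →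
      ContinuousOn (fun z => rf (u z)) S := by
    intro u hu h0
    have h1 : ContinuousOn (fun z => vecMulVec (u z) (u z)) S :=
      (Continuous.matrix_vecMulVec (A := fun u : Fin n → ℝ => u) continuous_id continuous_id).comp_continuousOn hu
    have h2 : ContinuousOn (fun z => u z ⬝ᵥ u z) S :=
      (Continuous.dotProduct (A := fun u : Fin n → ℝ => u) continuous_id continuous_id).comp_continuousOn hu
    exact continuousOn_const.sub ((continuousOn_const.div h2 h0).smul h1)
  refine (key _ (hf.add hg) fun z hz => ?_).mul (key _ hf fun z hz => by rw [uf z hz]; norm_num)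
  have := vw_dot (uf z hz) (ug z hz)
  rw [Pi.add_apply, this]
  simpa using h z hz

def SOk (n k : ℕ) : Set (Matrix (Fin n) (Fin n) ℝ) :=
  {A | Aᵀ * A = 1 ∧ A.det = 1 ∧ ∀ i : Fin n, k ≤ i.val → A *ᵥ ee i = ee i}

theorem SOk_closed (n k : ℕ) : IsClosed (SOk n k) := by
  have : SOk n k = {A | Aᵀ * A = 1} ∩ ({A | A.det = 1} ∩
      ⋂ i : Fin n, ⋂ _ : k ≤ i.val, {A | A *ᵥ ee i = ee i}) := by
    ext v; simp [SOk]
  rw [this]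
  refine (isClosed_eq (by fun_prop) (by fun_prop)).inter ((isClosed_eq (by fun_prop) (by fun_prop)).inter ?_)
  exact isClosed_iInter fun i => isClosed_iInter fun _ => isClosed_eq (by fun_prop) (by fun_prop)

theorem SOk_compact (n k : ℕ) : IsCompact (SOk n k) := by
  have h : IsCompact (Set.pi univ fun _ : Fin n => Set.pi univ fun _ : Fin n => Set.Icc (-1 : ℝ) 1) :=
    isCompact_univ_pi fun _ => isCompact_univ_pi fun _ => isCompact_Icc
  refine IsCompact.of_isClosed_subset (X := Matrix (Fin n) (Fin n) ℝ) h (SOk_closed n k) fun A hA i _ j _ => ?_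
  have h1 := congrFun (congrFun hA.1 j) j
  rw [mul_apply] at h1
  simp only [transpose_apply, one_apply_eq] at h1
  have : A i j ^ 2 ≤ 1 := by
    rw [← h1, pow_two]
    exact Finset.single_le_sum (f := fun i => A i j * A i j) (fun j _ => mul_self_nonneg _) (Finset.mem_univ i)
  exact abs_le.1 ((sq_le_one_iff_abs_le_one _).1 this)

theorem SOk_one (hn : 0 < n) : SOk n 1 = {1} := by
  ext A
  constructor
  · intro hA
    have hcol : ∀ i j : Fin n, j.val ≠ 0 → A i j = (1 : Matrix _ _ ℝ) i j := by
      intro i j hj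
      have := congrFun (hA.2.2 j (by omega)) i
      simpa [ee, Pi.single_apply, one_apply] using this
    have hrow : ∀ j : Fin n, j.val ≠ 0 → A j ⟨0, hn⟩ = 0 := by
      intro j hj
      have h1 := congrFun (congrFun hA.1 j) ⟨0, hn⟩
      rw [mul_apply, one_apply_ne (by rintro rfl; simp at hj)] at h1
      simpa [hcol _ j hj, one_apply] using h1
    have hd : A = diagonal (fun i => if i.val = 0 then A ⟨0, hn⟩ ⟨0, hn⟩ else 1) := by
      ext i j
      by_cases hj : j.val = 0
      · have : j = ⟨0, hn⟩ := Fin.ext hj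
        subst this
        by_cases hi : i.val = 0
        · have : i = ⟨0, hn⟩ := Fin.ext hi
          subst this; simp
        · rw [hrow i hi, diagonal_apply_ne]; rintro rfl; simp at hi
      · rw [hcol i j hj]
        by_cases e : i = j
        · subst e; simp [hj]
        · simp [e]
    have hdet := hA.2.1
    rw [hd, det_diagonal, Finset.prod_eq_single ⟨0, hn⟩] at hdet
    · simp only [if_true] at hdet
      rw [hdet] at hd
      simp at hd
      exact hd
    · intro b _ hb
      rw [if_neg]; intro h; exact hb (Fin.ext h)
    · simp
  · rintro rfl
    simp [SOk]

theorem Sp_unit {k : Fin n} {a : ℕ} (h : v ∈ Sp k a) : v ⬝ᵥ v = 1 := by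
  rw [← h.1, dotProduct]; simp [pow_two]

theorem unit_sum (h : v ⬝ᵥ v = 1) : ∑ i, v i ^ 2 = 1 := by
  rw [← h, dotProduct]; simp [pow_two]

theorem orth_dot {A : Matrix (Fin n) (Fin n) ℝ} (h : Aᵀ * A = 1) (x y : Fin n → ℝ) :
    (A *ᵥ x) ⬝ᵥ (A *ᵥ y) = x ⬝ᵥ y := by
  rw [dotProduct_mulVec, vecMul_mulVec, h, vecMul_one]

theorem SOk_col {k : Fin n} {A : Matrix (Fin n) (Fin n) ℝ} (hA : A ∈ SOk n (k.val + 1)) :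
    A *ᵥ ee k ∈ Sp k 0 := by
  refine ⟨unit_sum ?_, fun i hi => ?_⟩
  · rw [orth_dot hA.1]; simp [ee]
  · have hi : k < i := hi.resolve_left (by omega)
    have h1 := orth_dot hA.1 (ee k) (ee i)
    rw [hA.2.2 i hi] at h1
    simpa [ee, hi.ne, hi.ne'] using h1

theorem SOk_mono {k : ℕ} : SOk n k ⊆ SOk n (k + 1) := fun _ h => ⟨h.1, h.2.1, fun i hi => h.2.2 i (by omega)⟩

theorem SOk_fib {k : Fin n} {A : Matrix (Fin n) (Fin n) ℝ} : A ∈ SOk n k ↔ A ∈ SOk n (k.val + 1) ∧ A *ᵥ ee k = ee k := by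
  constructor
  · exact fun h => ⟨SOk_mono h, h.2.2 k le_rfl⟩
  · rintro ⟨h, h'⟩
    refine ⟨h.1, h.2.1, fun i hi => ?_⟩
    rcases hi.eq_or_lt with e | e
    · rw [← Fin.ext e]; exact h'
    · exact h.2.2 i e

theorem Rm_mul_mem {k : Fin n} {A : Matrix (Fin n) (Fin n) ℝ} (hA : A ∈ SOk n (k.val + 1)) (hv : v ∈ Sp k 0)
    (hw : w ∈ Sp k 0) (h : 1 + v ⬝ᵥ w ≠ 0) : Rm v w * A ∈ SOk n (k.val + 1) := by
  have hv' := Sp_unit hv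
  have hw' := Sp_unit hw
  refine ⟨?_, ?_, fun i hi => ?_⟩
  · rw [transpose_mul, Matrix.mul_assoc, ← Matrix.mul_assoc _ (Rm v w), Rm_orth hv' hw' h, Matrix.one_mul, hA.1]
  · rw [det_mul, Rm_det hv' hw' h, hA.2.1, one_mul]
  · rw [← mulVec_mulVec, hA.2.2 i hi, Rm_fix (hv.2 i (Or.inr hi)) (hw.2 i (Or.inr hi))]

end so
end ASC
end

section
open Topology Set Filter

namespace ASC
section so
open Matrix
variable {n : ℕ} {k o : Fin n} {ε : ℝ}

theorem seg_mem {u w : Fin n → ℝ} (hu : u ∈ Dp k o ε) (hw : w ∈ Dp k o ε) (h : 0 ≤ u ⬝ᵥ w) {t : ℝ}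
    (ht : t ∈ Icc (0 : ℝ) 1) : (1 - t) • u + t • w ≠ 0 ∧ nrm ((1 - t) • u + t • w) ∈ Dp k o ε ∧
      0 ≤ u ⬝ᵥ nrm ((1 - t) • u + t • w) := by
  have h1 : u ⬝ᵥ ((1 - t) • u + t • w) = (1 - t) + t * (u ⬝ᵥ w) := by
    simp [dotProduct_add, dotProduct_smul, Sp_unit hu.1]
  have h0 : (1 - t) • u + t • w ≠ 0 := by
    intro e
    rcases ht.2.lt_or_eq with h2 | rfl
    · rw [e, dotProduct_zero] at h1
      have := mul_nonneg ht.1 h; linarith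
    · have := Sp_unit hw.1
      simp at e; simp [e] at this
  have hp : 0 ≤ (√(∑ i, ((1 - t) • u + t • w) i ^ 2))⁻¹ := by positivity
  refine ⟨h0, ⟨⟨nrm_unit h0, fun i hi => ?_⟩, ?_⟩, ?_⟩
  · simp [nrm, hu.1.2 i hi, hw.1.2 i hi]
  · have h3 : 0 ≤ (√(∑ i, ((1 - t) • u + t • w) i ^ 2))⁻¹ * ((1 - t) * (ε * u o) + t * (ε * w o)) :=
      mul_nonneg hp (add_nonneg (mul_nonneg (by linarith [ht.2]) hu.2) (mul_nonneg ht.1 hw.2))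
    refine h3.trans_eq ?_
    simp only [nrm, Pi.smul_apply, Pi.add_apply, smul_eq_mul]; ring
  · rw [nrm, dotProduct_smul, h1]
    exact mul_nonneg hp (add_nonneg (by linarith [ht.2]) (mul_nonneg ht.1 h))

theorem nrm_cont {Z : Type*} [TopologicalSpace Z] {S : Set Z} {f : Z → Fin n → ℝ} (hf : ContinuousOn f S)
    (h : ∀ z ∈ S, f z ≠ 0) : ContinuousOn (fun z => nrm (f z)) S := by
  unfold nrm
  have hc : ContinuousOn (fun z => √(∑ i, f z i ^ 2)) S := by fun_prop
  refine ContinuousOn.smul (hc.inv₀ fun z hz => ?_) hf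
  exact (Real.sqrt_pos.2 (sumsq_pos (h z hz))).ne'

def TT (k o : Fin n) (ε : ℝ) : Set (Matrix (Fin n) (Fin n) ℝ) :=
  {A | A ∈ SOk n (k.val + 1) ∧ A *ᵥ ee k ∈ Dp k o ε}

theorem mv_cont (x : Fin n → ℝ) : Continuous fun A : Matrix (Fin n) (Fin n) ℝ => A *ᵥ x :=
  continuous_id.matrix_mulVec continuous_const

theorem TT_closed : IsClosed (TT k o ε) :=
  (SOk_closed n _).inter ((Dp_closed k o ε).preimage (mv_cont _))
theorem TT_compact : IsCompact (TT k o ε) :=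
  (SOk_compact n _).of_isClosed_subset TT_closed fun _ h => h.1

theorem cmul {Z : Type*} [TopologicalSpace Z] {S : Set Z} {f g : Z → Matrix (Fin n) (Fin n) ℝ} (hf : ContinuousOn f S)
    (hg : ContinuousOn g S) : ContinuousOn (fun z => f z * g z) S := hf.mul hg

theorem TT_move {u w : Matrix (Fin n) (Fin n) ℝ → Fin n → ℝ} {ψ : Matrix (Fin n) (Fin n) ℝ → Matrix (Fin n) (Fin n) ℝ}
    (cu : ContinuousOn u (TT k o ε)) (cw : ContinuousOn w (TT k o ε)) (cψ : ContinuousOn ψ (TT k o ε))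
    (hu : ∀ A ∈ TT k o ε, u A ∈ Dp k o ε) (hw : ∀ A ∈ TT k o ε, w A ∈ Dp k o ε)
    (huw : ∀ A ∈ TT k o ε, 0 ≤ u A ⬝ᵥ w A) (hψ : ∀ A ∈ TT k o ε, ψ A ∈ SOk n (k.val + 1))
    (hc : ∀ A ∈ TT k o ε, ψ A *ᵥ ee k = u A) {p : ℕ} {φ : Co (Matrix (Fin n) (Fin n) ℝ)} (hφ : Coc (TT k o ε) p φ) :
    Cob (TT k o ε) p (pb ψ φ + pb (fun A => Rm (u A) (w A) * ψ A) φ) := by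
  let x : ℝ × Matrix (Fin n) (Fin n) ℝ → Fin n → ℝ := fun z => (1 - z.1) • u z.2 + z.1 • w z.2
  have hs : MapsTo Prod.snd (Icc (0 : ℝ) 1 ×ˢ TT k o ε) (TT k o ε) := fun z hz => hz.2
  have hx : ContinuousOn x (Icc (0 : ℝ) 1 ×ˢ TT k o ε) :=
    ((by fun_prop : ContinuousOn (fun z : ℝ × Matrix (Fin n) (Fin n) ℝ => 1 - z.1) _).smul
      (cu.comp continuousOn_snd hs)).add (continuousOn_fst.smul (cw.comp continuousOn_snd hs))
  have hH := homot (p := p) (φ := φ) (B := TT k o ε) (TT_compact (k := k) (o := o) (ε := ε))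
    (H := fun t A => Rm (u A) (nrm (x (t, A))) * ψ A) ?_ ?_ hφ
  · refine hH.congr fun t ht => ?_
    simp only [Pi.add_apply, pb]
    congr 1
    · congr 1; funext i
      simp [x, nrm_id (hu _ (ht i)).1.1, Rm_self (Sp_unit (hu _ (ht i)).1)]
    · congr 1; funext i
      simp [x, nrm_id (hw _ (ht i)).1.1]
  · refine cmul (Rm_cont (cu.comp continuousOn_snd hs)
      (nrm_cont hx fun z hz => (seg_mem (hu _ hz.2) (hw _ hz.2) (huw _ hz.2) hz.1).1) ?_ ?_ ?_)
        (cψ.comp continuousOn_snd hs)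
    · exact fun z hz => Sp_unit (hu _ hz.2).1
    · exact fun z hz => Sp_unit (seg_mem (hu _ hz.2) (hw _ hz.2) (huw _ hz.2) hz.1).2.1.1
    · exact fun z hz => by linarith [(seg_mem (hu _ hz.2) (hw _ hz.2) (huw _ hz.2) hz.1).2.2]
  · intro t ht A hA
    obtain ⟨h1, h2, h3⟩ := seg_mem (hu _ hA) (hw _ hA) (huw _ hA) ht
    have h4 : 1 + u A ⬝ᵥ nrm (x (t, A)) ≠ 0 := by linarith
    have e0 : ∀ {a : Fin n → ℝ}, a ∈ Sp k o → a ∈ Sp k 0 := fun h => ⟨h.1, fun i hi => h.2 i (by omega)⟩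
    refine ⟨Rm_mul_mem (hψ _ hA) (e0 (hu _ hA).1) (e0 h2.1) h4, ?_⟩
    rw [← mulVec_mulVec, hc _ hA, Rm_apply (Sp_unit (hu _ hA).1) (Sp_unit h2.1) h4]
    exact h2

/-- the pole -/
def pl (o : Fin n) (ε : ℝ) : Fin n → ℝ := ε • ee o

theorem pl_unit (hε : ε = 1 ∨ ε = -1) : pl o ε ⬝ᵥ pl o ε = 1 := by
  rcases hε with rfl | rfl <;> simp [pl, ee]

theorem pl_mem (ho : o < k) (hε : ε = 1 ∨ ε = -1) : pl o ε ∈ Dp k o ε := by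
  refine ⟨⟨unit_sum (pl_unit hε), fun i hi => ?_⟩, ?_⟩
  · have : i ≠ o := by rintro rfl; rcases hi with h | h <;> [omega; exact (lt_asymm h ho)]
    simp [pl, ee, this]
  · rcases hε with rfl | rfl <;> simp [pl, ee]

theorem dot_pl (v : Fin n → ℝ) : v ⬝ᵥ pl o ε = ε * v o := by simp [pl, ee]

noncomputable def rho (k o : Fin n) (ε : ℝ) (A : Matrix (Fin n) (Fin n) ℝ) : Matrix (Fin n) (Fin n) ℝ :=
  Rm (pl o ε) (ee k) * (Rm (A *ᵥ ee k) (pl o ε) * A)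

theorem ee_unit : ee k ⬝ᵥ ee k = 1 := by simp [ee]
theorem pl_ee (ho : o < k) : pl o ε ⬝ᵥ ee k = 0 := by
  rw [dotProduct_comm, dot_pl]; simp [ee, ho.ne]

theorem Tcontr (ho : o < k) (hε : ε = 1 ∨ ε = -1) {p : ℕ} {φ : Co (Matrix (Fin n) (Fin n) ℝ)}
    (hφ : Coc (TT k o ε) p φ) : Cob (TT k o ε) p (φ + pb (rho k o ε) φ) := by
  have e0 : ∀ {a : Fin n → ℝ}, a ∈ Sp k o → a ∈ Sp k 0 := fun h => ⟨h.1, fun i hi => h.2 i (by omega)⟩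
  have cv := (mv_cont (ee k)).continuousOn (s := TT k o ε)
  have hp : ∀ A ∈ TT k o ε, 0 ≤ (A *ᵥ ee k) ⬝ᵥ pl o ε := fun A hA => by rw [dot_pl]; exact hA.2.2
  have hp' : ∀ A ∈ TT k o ε, 1 + (A *ᵥ ee k) ⬝ᵥ pl o ε ≠ 0 := fun A hA => by linarith [hp A hA]
  have h1 := TT_move (u := fun A => A *ᵥ ee k) (w := fun _ => pl o ε) (ψ := fun A => A) cv continuousOn_const
    continuousOn_id (fun A hA => hA.2) (fun A hA => pl_mem ho hε) hp (fun A hA => hA.1) (fun A hA => rfl) hφ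
  have h2 := TT_move (u := fun _ => pl o ε) (w := fun _ => ee k) (ψ := fun A => Rm (A *ᵥ ee k) (pl o ε) * A)
    continuousOn_const continuousOn_const (cmul (Rm_cont cv continuousOn_const (fun A hA => Sp_unit hA.2.1)
      (fun _ _ => pl_unit hε) hp') continuousOn_id) (fun _ _ => pl_mem ho hε) (fun _ _ => ee_mem_D ho)
    (fun _ _ => (pl_ee ho).ge) (fun A hA => Rm_mul_mem hA.1 (e0 hA.2.1) (e0 (pl_mem ho hε).1) (hp' A hA))
    (fun A hA => by rw [← mulVec_mulVec, Rm_apply (Sp_unit hA.2.1) (pl_unit hε) (hp' A hA)]) hφ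
  exact h1.trans h2

theorem rho_cont (ho : o < k) (hε : ε = 1 ∨ ε = -1) : ContinuousOn (rho k o ε) (TT k o ε) := by
  refine cmul continuousOn_const (cmul (Rm_cont (mv_cont (ee k)).continuousOn continuousOn_const
    (fun A hA => Sp_unit hA.2.1) (fun _ _ => pl_unit hε) fun A hA => ?_) continuousOn_id)
  have := hA.2.2
  rw [dot_pl]; linarith

theorem rho_mem (ho : o < k) (hε : ε = 1 ∨ ε = -1) : MapsTo (rho k o ε) (TT k o ε) (SOk n k) := by
  intro A hA
  have e0 : ∀ {a : Fin n → ℝ}, a ∈ Sp k o → a ∈ Sp k 0 := fun h => ⟨h.1, fun i hi => h.2 i (by omega)⟩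
  have hp' : 1 + (A *ᵥ ee k) ⬝ᵥ pl o ε ≠ 0 := by rw [dot_pl]; linarith [hA.2.2]
  have h2 : 1 + pl o ε ⬝ᵥ ee k ≠ 0 := by rw [pl_ee ho]; norm_num
  rw [SOk_fib]
  refine ⟨Rm_mul_mem (Rm_mul_mem hA.1 (e0 hA.2.1) (e0 (pl_mem ho hε).1) hp') (e0 (pl_mem ho hε).1) (ee_mem k (by omega)) h2, ?_⟩
  rw [rho, ← mulVec_mulVec, ← mulVec_mulVec, Rm_apply (Sp_unit hA.2.1) (pl_unit hε) hp', Rm_apply (pl_unit hε) ee_unit h2]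

theorem rho_id (ho : o < k) (hε : ε = 1 ∨ ε = -1) {A : Matrix (Fin n) (Fin n) ℝ} (hA : A ∈ SOk n k) : rho k o ε A = A := by
  rw [rho, (SOk_fib.1 hA).2, ← Matrix.mul_assoc, Rm_inv ee_unit (pl_unit hε), Matrix.one_mul]
  rw [dotProduct_comm, pl_ee ho]; norm_num

theorem F_TT (ho : o < k) : SOk n k ⊆ TT k o ε := fun A hA => by
  rw [SOk_fib] at hA
  exact ⟨hA.1, by rw [hA.2]; exact ee_mem_D ho⟩

theorem TT_union (ho : o.val = 0) : TT k o 1 ∪ TT k o (-1) = SOk n (k.val + 1) := by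
  ext A
  have := Set.ext_iff.1 (Sp_split k o) (A *ᵥ ee k)
  simp only [TT, mem_union, mem_setOf_eq] at *
  rw [← and_or_left, this]
  exact ⟨fun h => h.1, fun h => ⟨h, ho ▸ SOk_col h⟩⟩

theorem TT_inter (ho : o.val = 0) : TT k o 1 ∩ TT k o (-1) = {A | A ∈ SOk n (k.val + 1) ∧ A *ᵥ ee k ∈ Sp k 1} := by
  ext A
  have := Set.ext_iff.1 (Sp_inter k o) (A *ᵥ ee k)
  simp only [TT, mem_inter_iff, mem_setOf_eq, ho] at *
  rw [← this]; tauto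

/-- inverse clutching -/
noncomputable def mm (k o : Fin n) (x : (Fin n → ℝ) × Matrix (Fin n) (Fin n) ℝ) : Matrix (Fin n) (Fin n) ℝ :=
  Rm (pl o 1) x.1 * (Rm (ee k) (pl o 1) * x.2)
noncomputable def ll (k o : Fin n) (A : Matrix (Fin n) (Fin n) ℝ) : (Fin n → ℝ) × Matrix (Fin n) (Fin n) ℝ :=
  (A *ᵥ ee k, rho k o 1 A)

theorem ll_cont (ho : o < k) : ContinuousOn (ll k o) (TT k o 1) :=
  (mv_cont _).continuousOn.prodMk (rho_cont ho (Or.inl rfl))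

theorem ll_mem (ho : o < k) (h0 : o.val = 0) : MapsTo (ll k o) (TT k o 1 ∩ TT k o (-1)) (Sp k 1 ×ˢ SOk n k) := by
  intro A hA
  refine ⟨?_, rho_mem ho (Or.inl rfl) hA.1⟩
  rw [TT_inter h0] at hA; exact hA.2

theorem Sp1_o {v : Fin n → ℝ} (h0 : o.val = 0) (hv : v ∈ Sp k 1) : v ⬝ᵥ pl o ε = 0 := by
  rw [dot_pl, hv.2 o (by omega), mul_zero]

theorem mm_cont (ho : o < k) (h0 : o.val = 0) : ContinuousOn (mm k o) (Sp k 1 ×ˢ SOk n k) := by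
  refine cmul (Rm_cont continuousOn_const continuousOn_fst (fun _ _ => pl_unit (Or.inl rfl)) (fun x hx => Sp_unit hx.1) ?_)
    (cmul continuousOn_const continuousOn_snd)
  intro x hx
  rw [dotProduct_comm, Sp1_o h0 hx.1]; norm_num

theorem mm_e (ho : o < k) (h0 : o.val = 0) {x : (Fin n → ℝ) × Matrix (Fin n) (Fin n) ℝ} (hx : x ∈ Sp k 1 ×ˢ SOk n k) :
    mm k o x *ᵥ ee k = x.1 := by
  have h1 : 1 + ee k ⬝ᵥ pl o 1 ≠ 0 := by rw [dotProduct_comm, pl_ee ho]; norm_num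
  have h2 : 1 + pl o 1 ⬝ᵥ x.1 ≠ 0 := by rw [dotProduct_comm, Sp1_o h0 hx.1]; norm_num
  rw [mm, ← mulVec_mulVec, ← mulVec_mulVec, (SOk_fib.1 hx.2).2, Rm_apply ee_unit (pl_unit (Or.inl rfl)) h1,
    Rm_apply (pl_unit (Or.inl rfl)) (Sp_unit hx.1) h2]

theorem mm_mem (ho : o < k) (h0 : o.val = 0) : MapsTo (mm k o) (Sp k 1 ×ˢ SOk n k) (TT k o 1 ∩ TT k o (-1)) := by
  intro x hx
  have e0 : ∀ {a : Fin n → ℝ} {b : ℕ}, a ∈ Sp k b → a ∈ Sp k 0 := fun h => ⟨h.1, fun i hi => h.2 i (by omega)⟩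
  have h1 : 1 + ee k ⬝ᵥ pl o 1 ≠ 0 := by rw [dotProduct_comm, pl_ee ho]; norm_num
  have h2 : 1 + pl o 1 ⬝ᵥ x.1 ≠ 0 := by rw [dotProduct_comm, Sp1_o h0 hx.1]; norm_num
  have hP := e0 (pl_mem ho (Or.inl (rfl : (1 : ℝ) = 1))).1
  rw [TT_inter h0]
  refine ⟨Rm_mul_mem (Rm_mul_mem (SOk_mono hx.2) (ee_mem k (by omega)) hP h1) hP (e0 hx.1) h2, ?_⟩
  rw [mm_e ho h0 hx]; exact hx.1

theorem rho_mm (ho : o < k) (h0 : o.val = 0) {x : (Fin n → ℝ) × Matrix (Fin n) (Fin n) ℝ} (hx : x ∈ Sp k 1 ×ˢ SOk n k) :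
    rho k o 1 (mm k o x) = x.2 := by
  have h1 : 1 + ee k ⬝ᵥ pl o 1 ≠ 0 := by rw [dotProduct_comm, pl_ee ho]; norm_num
  have h2 : 1 + pl o 1 ⬝ᵥ x.1 ≠ 0 := by rw [dotProduct_comm, Sp1_o h0 hx.1]; norm_num
  rw [rho, mm_e ho h0 hx, mm, ← Matrix.mul_assoc (Rm x.1 _), Rm_inv (pl_unit (Or.inl rfl)) (Sp_unit hx.1) h2,
    Matrix.one_mul, ← Matrix.mul_assoc, Rm_inv ee_unit (pl_unit (Or.inl rfl)) h1, Matrix.one_mul]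

theorem mm_ll (ho : o < k) (h0 : o.val = 0) {A : Matrix (Fin n) (Fin n) ℝ} (hA : A ∈ TT k o 1 ∩ TT k o (-1)) :
    mm k o (ll k o A) = A := by
  have hv : A *ᵥ ee k ∈ Sp k 1 := (ll_mem ho h0 hA).1
  have h1 : 1 + pl o 1 ⬝ᵥ ee k ≠ 0 := by rw [pl_ee ho]; norm_num
  have h2 : 1 + (A *ᵥ ee k) ⬝ᵥ pl o 1 ≠ 0 := by rw [Sp1_o h0 hv]; norm_num
  rw [mm, ll, rho, ← Matrix.mul_assoc (Rm (ee k) _), Rm_inv (pl_unit (Or.inl rfl)) ee_unit h1, Matrix.one_mul,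
    ← Matrix.mul_assoc, Rm_inv (Sp_unit hv) (pl_unit (Or.inl rfl)) h2, Matrix.one_mul]

theorem pl_neg : pl o (-1) = -pl o 1 := by simp [pl]

theorem rho_mm_neg (ho : o < k) (h0 : o.val = 0) {x : (Fin n → ℝ) × Matrix (Fin n) (Fin n) ℝ} (hx : x ∈ Sp k 1 ×ˢ SOk n k) :
    rho k o (-1) (mm k o (anti x)) = rho k o (-1) (mm k o x) := by
  have h := Rm_even' (v := x.1) (w := pl o 1) (Sp_unit hx.1) (pl_unit (Or.inl rfl)) (Sp1_o h0 hx.1)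
  rw [rho, rho, mm_e ho h0 hx, mm_e ho h0 (anti_S hx), mm, mm, ← Matrix.mul_assoc (Rm x.1 _),
    ← Matrix.mul_assoc (Rm (anti x).1 _), pl_neg, ← h]
  rfl

theorem mm_F (ho : o < k) {x : (Fin n → ℝ) × Matrix (Fin n) (Fin n) ℝ} (hx : x ∈ ({ee k} : Set (Fin n → ℝ)) ×ˢ SOk n k) :
    mm k o x = x.2 := by
  rw [mm, show x.1 = ee k from hx.1, ← Matrix.mul_assoc, Rm_inv ee_unit (pl_unit (Or.inl rfl)), Matrix.one_mul]
  rw [dotProduct_comm, pl_ee ho]; norm_num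
end so
end ASC
end

section
open Topology Set Filter

namespace ASC
section so2
open Matrix
variable {n : ℕ} {k o : Fin n}

theorem invK (ho : o < k) (h0 : o.val = 0) {j : ℕ} (hj : 1 + j = k.val) {q : ℕ} (hq : q ≤ j)
    {w : Co (Matrix (Fin n) (Fin n) ℝ)} (hw : Coc (SOk n k) q w) :
    Cob (TT k o 1 ∩ TT k o (-1)) q (pb (rho k o 1) w + pb (rho k o (-1)) w) := by
  have h1 : Coc (Sp k 1 ×ˢ SOk n k) q (pb Prod.snd w) := hw.pb continuousOn_snd fun x hx => hx.2
  have h2 : Coc (Sp k 1 ×ˢ SOk n k) q (pb (mm k o) (pb (rho k o (-1)) w)) :=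
    (hw.pb (rho_cont ho (Or.inr rfl)) (rho_mem ho (Or.inr rfl))).pb (mm_cont ho h0) fun x hx => (mm_mem ho h0 hx).2
  have h3 := inv_cob k (SOk_compact n k) (SOk_closed n k) j 1 hj q hq _ (h1.add h2) ?_ ?_
  · refine (h3.pb ((ll_cont ho).mono inter_subset_left) (ll_mem ho h0)).congr fun t ht => ?_
    simp only [pb_add, pb_pb, Pi.add_apply, pb]
    congr 2
    funext i
    simp [mm_ll ho h0 (ht i)]
  · intro t ht
    simp only [pb_pb, Pi.add_apply, pb]
    exact congrArg₂ (· + ·) rfl (congrArg w (funext fun i => rho_mm_neg ho h0 (ht i)))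
  · refine (Cob.refl (φ := pb Prod.snd w)).congr fun t ht => ?_
    simp only [pb_pb, Pi.add_apply, pb]
    congr 2
    funext i
    simp only [Function.comp]
    rw [mm_F ho (ht i), rho_id ho (Or.inr rfl) (ht i).2]

theorem Ext (ho : o < k) (h0 : o.val = 0) {j : ℕ} (hj : 1 + j = k.val) {q : ℕ} (hq : q ≤ j)
    {w : Co (Matrix (Fin n) (Fin n) ℝ)} (hw : Coc (SOk n k) q w) :
    ∃ x, Coc (SOk n (k.val + 1)) q x ∧ ∀ t : ℕ → _, (∀ i, t i ∈ SOk n k) → x t = w t := by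
  obtain ⟨x, h1, h2⟩ := mv3 (TT_closed (k := k) (o := o)) TT_closed
    (hw.pb (rho_cont ho (Or.inl rfl)) (rho_mem ho (Or.inl rfl)))
    (hw.pb (rho_cont ho (Or.inr rfl)) (rho_mem ho (Or.inr rfl))) (invK ho h0 hj hq hw)
  rw [TT_union h0] at h1
  refine ⟨x, h1, fun t ht => ?_⟩
  rw [h2 t fun i => F_TT ho (ht i), pb]
  congr 1; funext i; exact rho_id ho (Or.inl rfl) (ht i)
end so2

def Wd {X : Type*} (z : ℕ → Co X) : ℕ → Co X
  | 0 => 1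
  | j + 1 => cup (j + 1) (z (j + 1)) (Wd z j)
def Dg : ℕ → ℕ
  | 0 => 0
  | j + 1 => (j + 1) + Dg j

section wd
variable {X Y : Type*}
theorem Wd_pb (f : X → Y) (z : ℕ → Co Y) (j : ℕ) : Wd (fun i => pb f (z i)) j = pb f (Wd z j) := by
  induction j with
  | zero => rfl
  | succ j ih => simp only [Wd, ih, pb_cup]

theorem Wd_congr {S : Set X} {z z' : ℕ → Co X} {j : ℕ} (h : ∀ i, 1 ≤ i → i ≤ j → ∀ t : ℕ → X, (∀ i, t i ∈ S) → z i t = z' i t) :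
    ∀ t : ℕ → X, (∀ i, t i ∈ S) → Wd z j t = Wd z' j t := by
  induction j with
  | zero => intros; rfl
  | succ j ih =>
    intro t ht
    simp only [Wd, cup]
    rw [h (j + 1) (by omega) le_rfl t ht, ih (fun i h1 h2 => h i h1 (by omega)) _ fun i => ht _]

variable [TopologicalSpace X]
theorem coc_one (S : Set X) : Coc S 0 1 := by
  refine ⟨fun _ _ _ => rfl, NZ.of_eq fun t _ => ?_⟩
  simp [dl]; rfl

theorem Wd_coc {S : Set X} {z : ℕ → Co X} {j : ℕ} (h : ∀ i, 1 ≤ i → i ≤ j → Coc S i (z i)) : Coc S (Dg j) (Wd z j) := by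
  induction j with
  | zero => exact coc_one S
  | succ j ih => exact (h (j + 1) (by omega) le_rfl).cup (ih fun i h1 h2 => h i h1 (by omega))
end wd

section so3
open Matrix
variable {n : ℕ} {k o : Fin n}

theorem T_van (ho : o < k) {ε : ℝ} (hε : ε = 1 ∨ ε = -1) {q : ℕ}
    (h : ∀ c, Coc (SOk n k) q c → Cob (SOk n k) q c) {φ : Co (Matrix (Fin n) (Fin n) ℝ)}
    (hφ : Coc (TT k o ε) q φ) : Cob (TT k o ε) q φ :=
  (Tcontr ho hε hφ).of_add ((h _ (hφ.mono (F_TT ho))).pb (rho_cont ho hε) (rho_mem ho hε))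

theorem K_van (ho : o < k) (h0 : o.val = 0) {j : ℕ} (hj : 1 + j = k.val) {D q : ℕ} (hq : D + j < q)
    (h : ∀ q, D < q → ∀ c, Coc (SOk n k) q c → Cob (SOk n k) q c) {φ : Co (Matrix (Fin n) (Fin n) ℝ)}
    (hφ : Coc (TT k o 1 ∩ TT k o (-1)) q φ) : Cob (TT k o 1 ∩ TT k o (-1)) q φ := by
  have h1 := sph_van k (SOk_compact n k) (SOk_closed n k) h j 1 hj q hq _ (hφ.pb (mm_cont ho h0) (mm_mem ho h0))
  refine (h1.pb ((ll_cont ho).mono inter_subset_left) (ll_mem ho h0)).congr fun t ht => ?_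
  simp only [pb]
  congr 1; funext i; exact mm_ll ho h0 (ht i)

theorem SO_van (ho : o < k) (h0 : o.val = 0) {j : ℕ} (hj : 1 + j = k.val) {D : ℕ}
    (h : ∀ q, D < q → ∀ c, Coc (SOk n k) q c → Cob (SOk n k) q c) (q : ℕ) (hq : D + k.val < q)
    (c : Co (Matrix (Fin n) (Fin n) ℝ)) (hc : Coc (SOk n (k.val + 1)) q c) : Cob (SOk n (k.val + 1)) q c := by
  obtain ⟨q, rfl⟩ : ∃ q', q = q' + 1 := ⟨q - 1, by omega⟩
  rw [← TT_union h0] at hc ⊢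
  obtain ⟨α, dα, hα⟩ := T_van ho (Or.inl rfl) (h _ (by omega)) (hc.mono subset_union_left)
  obtain ⟨β, dβ, hβ⟩ := T_van ho (Or.inr rfl) (h _ (by omega)) (hc.mono subset_union_right)
  rw [d_succ] at hα hβ
  obtain ⟨θ, dθ, h1, h2, -⟩ := mv1 TT_closed TT_closed hc dα hα dβ hβ
  refine h2.of_add (De_cob' TT_closed TT_closed dθ h1 ?_)
  exact K_van ho h0 hj (by omega) h ⟨dθ, h1.mono subset_rfl (inter_subset_left.trans subset_union_left)⟩

theorem SO_class (ho : o < k) (h0 : o.val = 0) {j : ℕ} (hj : 1 + j = k.val)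
    (h : ∀ q, Dg j < q → ∀ c, Coc (SOk n k) q c → Cob (SOk n k) q c)
    {z : ℕ → Co (Matrix (Fin n) (Fin n) ℝ)} (hz : ∀ i, 1 ≤ i → i ≤ j → Coc (SOk n k) i (z i))
    (hW : ¬ Cob (SOk n k) (Dg j) (Wd z j)) :
    ∃ z' : ℕ → Co (Matrix (Fin n) (Fin n) ℝ), (∀ i, 1 ≤ i → i ≤ j + 1 → Coc (SOk n (k.val + 1)) i (z' i)) ∧
      ¬ Cob (SOk n (k.val + 1)) (Dg (j + 1)) (Wd z' (j + 1)) := by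
  have hx : ∀ i, ∃ x, 1 ≤ i → i ≤ j → Coc (SOk n (k.val + 1)) i x ∧ ∀ t : ℕ → _, (∀ i, t i ∈ SOk n k) → x t = z i t := by
    intro i
    by_cases hi : 1 ≤ i ∧ i ≤ j
    · obtain ⟨x, hx⟩ := Ext ho h0 hj hi.2 (hz i hi.1 hi.2)
      exact ⟨x, fun _ _ => hx⟩
    · exact ⟨0, fun h1 h2 => (hi ⟨h1, h2⟩).elim⟩
  choose x hx using hx
  obtain ⟨s, cs, zs, hs⟩ := sph_class k (SOk_compact n k) (SOk_closed n k) j 1 hj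
  have hU : TT k o 1 ∪ TT k o (-1) = SOk n (k.val + 1) := TT_union h0
  set K := TT k o 1 ∩ TT k o (-1) with hK
  have hKc : IsClosed K := TT_closed.inter TT_closed
  obtain ⟨r, hr⟩ := exists_ret hKc
  have cl : Coc K j (pb (ll k o) s) := cs.pb ((ll_cont ho).mono inter_subset_left) (ll_mem ho h0)
  set θ := pb r (pb (ll k o) s) with hθ
  have dθ : Deg j θ := cl.1.pb r
  have nθ : NZ K (TT k o 1 ∪ TT k o (-1)) (dl j θ) := cl.2.pb (hr.near _)
  have eθ : ∀ t : ℕ → _, (∀ i, t i ∈ K) → θ t = s (ll k o ∘ t) := fun t ht => hr.pb_eq ht _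
  let z' : ℕ → Co (Matrix (Fin n) (Fin n) ℝ) := fun i => if i = j + 1 then De (TT k o 1) θ else x i
  have ez : ∀ i, i ≤ j → z' i = x i := fun i hi => by simp [z', show i ≠ j + 1 by omega]
  have hz' : ∀ i, 1 ≤ i → i ≤ j → Coc (SOk n (k.val + 1)) i (z' i) := fun i h1 h2 => by
    rw [ez i h2]; exact (hx i h1 h2).1
  refine ⟨z', fun i h1 h2 => ?_, fun hC => hW ?_⟩
  · rcases h2.lt_or_eq with h2 | rfl
    · exact hz' i h1 (by omega)
    · simp only [z', if_true]
      rw [← hU]; exact De_coc TT_closed TT_closed dθ nθ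
  have cW := Wd_coc hz'
  set W := Wd z' j with hWd
  have hFU : SOk n k ⊆ SOk n (k.val + 1) := SOk_mono
  have hKS : K ⊆ SOk n (k.val + 1) := hU ▸ inter_subset_left.trans subset_union_left
  have FK : SOk n k ⊆ K := fun A hA => ⟨F_TT ho hA, F_TT ho hA⟩
  have e1 : Wd z' (j + 1) = De (TT k o 1) (cup j θ W) := by
    simp only [Wd, ← De_cup, z', if_true]; rfl
  rw [e1, show Dg (j + 1) = j + Dg j + 1 by simp [Dg]; omega, ← hU] at hC
  have n2 : NZ K (TT k o 1 ∪ TT k o (-1)) (dl (j + Dg j) (cup j θ W)) := by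
    rw [dl_cup _ _ _ _ dθ]
    refine (nθ.cupl _ _).add (NZ.cupr ?_ _ _)
    rw [hU]; exact cW.2.mono hKS subset_rfl
  obtain ⟨a, b, ca, cb, eab⟩ := mv2 TT_closed (dθ.cup cW.1) n2 hC
  have hcl : Cob K (j + Dg j) (cup j θ W) := by
    suffices hh : Cob K (j + Dg j) (a + b) from hh.congr fun t ht => (eab t ht).symm
    rcases Nat.eq_zero_or_pos j with rfl | hj1
    · have t1 := (Tcontr ho (Or.inl rfl) ca).mono (S' := K) inter_subset_left
      have t2 := (Tcontr ho (Or.inr rfl) cb).mono (S' := K) inter_subset_right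
      have t3 := invK ho h0 hj (q := 0 + Dg 0) (by simp [Dg]) (cb.mono (F_TT ho))
      have t4 := t1.add (t2.trans t3.symm)
      rw [add_add_add_comm] at t4
      refine t4.of_add ((Cob.of_NZ NZ.zero).congr fun t ht => ?_)
      have hF : ∀ i, rho k o 1 (t i) ∈ SOk n k := fun i => rho_mem ho (Or.inl rfl) (ht i).1
      have e5 := eab (rho k o 1 ∘ t) fun i => FK (hF i)
      simp only [Pi.add_apply, pb, Pi.zero_apply]
      rw [← e5, cup, eθ (rho k o 1 ∘ t) fun i => FK (hF i), zs, zero_mul]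
      exact fun i => ⟨(SOk_fib.1 (hF i)).2, by
        simp only [ll, Function.comp]; rw [rho_id ho (Or.inl rfl) (hF i)]; exact hF i⟩
    · exact ((T_van ho (Or.inl rfl) (h _ (by omega)) ca).mono inter_subset_left).add
        ((T_van ho (Or.inr rfl) (h _ (by omega)) cb).mono inter_subset_right)
  have h5 : Cob K (Dg j) (W + pb (rho k o 1) W) :=
    (Tcontr ho (Or.inl rfl) (cW.mono fun A hA => hA.1)).mono inter_subset_left
  have h6 := Cob.cupr cl h5
  rw [cup_add] at h6
  have h7 : Cob K (j + Dg j) (cup j (pb (ll k o) s) W) := hcl.congr fun t ht => by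
    simp only [cup, eθ t ht]; rfl
  have h8 := (h6.symm).of_add h7
  have h9 := h8.pb (mm_cont ho h0) (mm_mem ho h0)
  have hll : ∀ y ∈ Sp k 1 ×ˢ SOk n k, ll k o (mm k o y) = y := fun y hy =>
    Prod.ext (mm_e ho h0 hy) (rho_mm ho h0 hy)
  refine (hs _ W (cW.mono hFU) (h9.congr fun t ht => ?_)).congr (Wd_congr fun i h1 h2 t ht => ?_)
  · simp only [pb, cup]
    congr 2
    · funext i; exact hll _ (ht i)
    · funext i; exact rho_mm ho h0 (ht _)
  · rw [ez i h2]; exact (hx i h1 h2).2 t ht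

theorem SO_main (hn : 0 < n) (j : ℕ) (hj : j < n) :
    (∀ q, Dg j < q → ∀ c, Coc (SOk n (j + 1)) q c → Cob (SOk n (j + 1)) q c) ∧
    ∃ z : ℕ → Co (Matrix (Fin n) (Fin n) ℝ), (∀ i, 1 ≤ i → i ≤ j → Coc (SOk n (j + 1)) i (z i)) ∧
      ¬ Cob (SOk n (j + 1)) (Dg j) (Wd z j) := by
  induction j with
  | zero =>
    rw [zero_add, SOk_one hn]
    refine ⟨fun q hq c hc => ?_, fun _ => 0, by omega, ?_⟩
    · obtain ⟨q, rfl⟩ : ∃ q', q = q' + 1 := ⟨q - 1, by simp [Dg] at hq; omega⟩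
      exact cob_point hc
    · rintro ⟨β, -, hβ⟩
      obtain ⟨V, hV, h⟩ := hβ 1 rfl
      have := h (fun _ => 1) fun i => ⟨mem_of_mem_nhds hV, rfl⟩
      simp [Dg, Wd] at this
  | succ j ih =>
    obtain ⟨h1, z, h2, h3⟩ := ih (by omega)
    have ho : (⟨0, hn⟩ : Fin n) < ⟨j + 1, hj⟩ := by simp [Fin.lt_def]
    refine ⟨fun q hq => ?_, ?_⟩
    · exact SO_van (k := ⟨j + 1, hj⟩) (o := ⟨0, hn⟩) ho rfl (j := j) (by simp; omega) h1 q (by simp [Dg] at *; omega)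
    · exact SO_class (k := ⟨j + 1, hj⟩) (o := ⟨0, hn⟩) ho rfl (j := j) (by simp; omega) h1 h2 h3
end so3
end ASC
end

section
open Topology Set Filter

namespace ASC
section pol
variable {I : Type*} [Fintype I] [DecidableEq I]

def Pol (Q : Set (Finset I)) : Set (I → ℝ) :=
  {w | (∀ i, 0 ≤ w i) ∧ ∑ i, w i = 1 ∧ ∃ σ ∈ Q, ∀ i ∉ σ, w i = 0}

theorem Pol_closed (Q : Set (Finset I)) : IsClosed (Pol Q) := by
  have : Pol Q = (⋂ i, {w | 0 ≤ w i}) ∩ ({w | ∑ i, w i = 1} ∩ ⋃ σ ∈ Q, ⋂ i, ⋂ _ : i ∉ σ, {w | w i = 0}) := by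
    ext w; simp [Pol]
  rw [this]
  refine (isClosed_iInter fun i => isClosed_le (by fun_prop) (by fun_prop)).inter
    ((isClosed_eq (by fun_prop) (by fun_prop)).inter ((Set.toFinite Q).isClosed_biUnion fun σ _ => ?_))
  exact isClosed_iInter fun i => isClosed_iInter fun _ => isClosed_eq (by fun_prop) (by fun_prop)

theorem Pol_compact (Q : Set (Finset I)) : IsCompact (Pol Q) := by
  have h : IsCompact (Set.pi univ fun _ : I => Set.Icc (0 : ℝ) 1) := isCompact_univ_pi fun _ => isCompact_Icc
  refine h.of_isClosed_subset (Pol_closed Q) fun w hw i _ => ⟨hw.1 i, ?_⟩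
  rw [← hw.2.1]; exact Finset.single_le_sum (f := w) (fun j _ => hw.1 j) (Finset.mem_univ i)

/-- part of the polyhedron near the face `s` -/
def PA (Q : Set (Finset I)) (s : Finset I) : Set (I → ℝ) := {w | w ∈ Pol Q ∧ 1 / 2 ≤ ∑ i ∈ s, w i}
def PC (Q : Set (Finset I)) (s : Finset I) : Set (I → ℝ) := {w | w ∈ Pol Q ∧ ∀ i ∉ s, w i = 0}

theorem PA_closed (Q : Set (Finset I)) (s : Finset I) : IsClosed (PA Q s) :=
  (Pol_closed Q).inter (isClosed_le (f := fun _ : I → ℝ => (1 / 2 : ℝ)) (g := fun w => ∑ i ∈ s, w i) (by fun_prop) (by fun_prop))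
theorem PA_compact (Q : Set (Finset I)) (s : Finset I) : IsCompact (PA Q s) :=
  (Pol_compact Q).of_isClosed_subset (PA_closed Q s) fun _ h => h.1
theorem PC_closed (Q : Set (Finset I)) (s : Finset I) : IsClosed (PC Q s) := by
  have : PC Q s = Pol Q ∩ ⋂ i, ⋂ _ : i ∉ s, {w | w i = 0} := by ext w; simp [PC]
  rw [this]
  exact (Pol_closed Q).inter (isClosed_iInter fun i => isClosed_iInter fun _ => isClosed_eq (by fun_prop) (by fun_prop))
theorem PC_compact (Q : Set (Finset I)) (s : Finset I) : IsCompact (PC Q s) :=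
  (Pol_compact Q).of_isClosed_subset (PC_closed Q s) fun _ h => h.1

theorem PA_union (Q : Set (Finset I)) (s : Finset I) : PA Q s ∪ PA Q sᶜ = Pol Q := by
  ext w
  simp only [PA, mem_union, mem_setOf_eq, ← and_or_left]
  refine ⟨fun h => h.1, fun h => ⟨h, ?_⟩⟩
  have h1 := Finset.sum_add_sum_compl s w
  rw [h.2.1] at h1
  by_contra! hc
  linarith

theorem PA_retr {Q : Set (Finset I)} {s : Finset I} {p : ℕ} {φ : Co (I → ℝ)} (hφ : Coc (PA Q s) p φ)
    (hc : Cob (PC Q s) p φ) : Cob (PA Q s) p φ := by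
  have hpos : ∀ w ∈ PA Q s, 0 < ∑ i ∈ s, w i := fun w hw => by linarith [hw.2]
  have hle : ∀ w ∈ PA Q s, ∑ i ∈ s, w i ≤ 1 := fun w hw => by
    rw [← hw.1.2.1]; exact Finset.sum_le_univ_sum_of_nonneg hw.1.1
  let ρ : (I → ℝ) → I → ℝ := fun w i => (if i ∈ s then w i else 0) / ∑ i ∈ s, w i
  have hρs : ∀ w ∈ PA Q s, ∑ i ∈ s, ρ w i = 1 := fun w hw => by
    have := hpos w hw
    simp only [ρ]
    rw [← Finset.sum_div, Finset.sum_congr rfl fun i hi => if_pos hi, div_self this.ne']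
  have hρ1 : ∀ w ∈ PA Q s, ∑ i, ρ w i = 1 := fun w hw => by
    rw [← hρs w hw]; symm
    exact Finset.sum_subset (Finset.subset_univ _) fun i _ hi => by simp [ρ, hi]
  have hρ0 : ∀ w ∈ PA Q s, ∀ i, 0 ≤ ρ w i := fun w hw i => by
    have := hpos w hw; have := hw.1.1 i
    simp only [ρ]; split_ifs <;> positivity
  refine contr (H := fun t w => (1 - t) • w + t • ρ w) (C := PC Q s) (PA_compact Q s) ?_ ?_ ?_ ?_ hφ hc
  · have : ContinuousOn (fun z : ℝ × (I → ℝ) => ρ z.2) (Icc 0 1 ×ˢ PA Q s) := by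
      refine continuousOn_pi.2 fun i => ?_
      simp only [ρ]
      refine ContinuousOn.div ?_ (by fun_prop) fun z hz => (hpos _ hz.2).ne'
      split_ifs <;> fun_prop
    exact (by fun_prop : ContinuousOn (fun z : ℝ × (I → ℝ) => (1 - z.1) • z.2) _).add (continuousOn_fst.smul this)
  · rintro t ⟨t0, t1⟩ w hw
    obtain ⟨⟨w0, w1, σ, hσ, wσ⟩, w2⟩ := hw
    have hw : w ∈ PA Q s := ⟨⟨w0, w1, σ, hσ, wσ⟩, w2⟩
    refine ⟨⟨fun i => ?_, ?_, σ, hσ, fun i hi => ?_⟩, ?_⟩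
    · have := hρ0 w hw i
      exact add_nonneg (mul_nonneg (by linarith) (w0 i)) (mul_nonneg t0 this)
    · simp only [Pi.add_apply, Pi.smul_apply, smul_eq_mul, Finset.sum_add_distrib, ← Finset.mul_sum, w1, hρ1 w hw]; ring
    · simp [ρ, wσ i hi]
    · simp only [Pi.add_apply, Pi.smul_apply, smul_eq_mul, Finset.sum_add_distrib, ← Finset.mul_sum, hρs w hw]
      nlinarith [hle w hw]
  · intro w hw; simp
  · intro w hw
    simp only [sub_self, zero_smul, one_smul, zero_add]
    refine ⟨⟨hρ0 w hw, hρ1 w hw, ?_⟩, fun i hi => by simp [ρ, hi]⟩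
    obtain ⟨σ, hσ, wσ⟩ := hw.1.2.2
    exact ⟨σ, hσ, fun i hi => by simp [ρ, wσ i hi]⟩

theorem convex_cob {C : Set (I → ℝ)} (hC : IsCompact C) (hc : Convex ℝ C) {p : ℕ} {φ : Co (I → ℝ)}
    (hφ : Coc C (p + 1) φ) : Cob C (p + 1) φ := by
  rcases C.eq_empty_or_nonempty with rfl | ⟨x, hx⟩
  · exact Cob.of_NZ fun x hx => hx.elim
  refine contr (H := fun t w => (1 - t) • w + t • x) (C := {x}) hC ?_ ?_ ?_ ?_ hφ
    (cob_point (hφ.mono (by simpa using hx)))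
  · fun_prop
  · intro t ht w hw
    exact hc hw hx (by linarith [ht.2]) ht.1 (by ring)
  · intro w _; simp
  · intro w _; simp

theorem PC_convex {Q : Set (Finset I)} {s : Finset I} (h : s ∈ Q ∨ s.card = 1) : Convex ℝ (PC Q s) := by
  rcases h with h | h
  · rintro x ⟨⟨x0, x1, -⟩, xs⟩ y ⟨⟨y0, y1, -⟩, ys⟩ a b ha hb hab
    have e : ∀ i ∉ s, (a • x + b • y) i = 0 := fun i hi => by simp [xs i hi, ys i hi]
    refine ⟨⟨fun i => ?_, ?_, s, h, e⟩, e⟩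
    · exact add_nonneg (mul_nonneg ha (x0 i)) (mul_nonneg hb (y0 i))
    · simp only [Pi.add_apply, Pi.smul_apply, smul_eq_mul, Finset.sum_add_distrib, ← Finset.mul_sum, x1, y1]; linarith
  · obtain ⟨v, rfl⟩ := Finset.card_eq_one.1 h
    refine Set.Subsingleton.convex fun x hx y hy => ?_
    have key : ∀ x ∈ PC Q {v}, x = Pi.single v 1 := fun x hx => by
      have h1 := hx.1.2.1
      rw [Finset.sum_eq_single v (fun i _ hi => hx.2 i (by simpa using hi)) (by simp)] at h1
      funext i
      by_cases e : i = v
      · subst e; simpa using h1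
      · simp [e, hx.2 i (by simpa using e)]
    rw [key x hx, key y hy]

theorem PA_cob {Q : Set (Finset I)} {s : Finset I} (h : s ∈ Q ∨ s.card = 1) {p : ℕ} {φ : Co (I → ℝ)}
    (hφ : Coc (Pol Q) (p + 1) φ) : Cob (PA Q s) (p + 1) φ :=
  PA_retr (hφ.mono fun _ h => h.1) (convex_cob (PC_compact Q s) (PC_convex h) (hφ.mono fun _ h => h.1))

/-- faces away from `s` -/
def away (Q : Set (Finset I)) (s : Finset I) : Set (Finset I) := {τ | ∃ σ ∈ Q, τ = σ \ s}

theorem PC_compl (Q : Set (Finset I)) (s : Finset I) : PC Q sᶜ = Pol (away Q s) := by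
  ext w
  constructor
  · rintro ⟨⟨h0, h1, σ, hσ, h2⟩, h3⟩
    refine ⟨h0, h1, σ \ s, ⟨σ, hσ, rfl⟩, fun i hi => ?_⟩
    by_cases his : i ∈ s
    · exact h3 i (by simpa using his)
    · exact h2 i fun h => hi (by simp [h, his])
  · rintro ⟨h0, h1, _, ⟨σ, hσ, rfl⟩, h2⟩
    exact ⟨⟨h0, h1, σ, hσ, fun i hi => h2 i (by simp [hi])⟩, fun i hi => h2 i (by simp at hi; simp [hi])⟩

theorem away_sub (Q : Set (Finset I)) (s : Finset I) : Pol (away Q s) ⊆ Pol Q := by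
  rw [← PC_compl]; exact fun _ h => h.1

theorem Pol_empty {Q : Set (Finset I)} (h : ∀ σ ∈ Q, σ = ∅) : Pol Q = ∅ := by
  ext w
  simp only [mem_empty_iff_false, iff_false]
  rintro ⟨h0, h1, σ, hσ, h2⟩
  rw [Finset.sum_eq_zero fun i _ => h2 i (by simp [h σ hσ])] at h1
  norm_num at h1

theorem Pol_dim (J : Finset I) : ∀ (Q : Set (Finset I)), (∀ σ ∈ Q, σ ⊆ J) → ∀ q, (∀ σ ∈ Q, σ.card ≤ q) →
    ∀ c, Coc (Pol Q) q c → Cob (Pol Q) q c := by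
  induction J using Finset.induction_on with
  | empty =>
    intro Q hQ q _ c _
    rw [Pol_empty fun σ hσ => by simpa using hQ σ hσ]
    exact Cob.of_NZ fun x hx => hx.elim
  | insert v J hv ih =>
    intro Q hQ q hq c hc
    cases q with
    | zero =>
      rw [Pol_empty fun σ hσ => by simpa using hq σ hσ]
      exact Cob.of_NZ fun x hx => hx.elim
    | succ q =>
      have hA : Cob (PA Q {v}) (q + 1) c := PA_cob (Or.inr (by simp)) hc
      have hB : Cob (PA Q {v}ᶜ) (q + 1) c := by
        refine PA_retr (hc.mono fun _ h => h.1) ?_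
        rw [PC_compl]
        refine ih _ ?_ _ ?_ c (hc.mono (away_sub _ _))
        · rintro _ ⟨σ, hσ, rfl⟩ i hi
          have := hQ σ hσ (Finset.mem_sdiff.1 hi).1
          simp at hi this; tauto
        · rintro _ ⟨σ, hσ, rfl⟩
          exact (Finset.card_le_card Finset.sdiff_subset).trans (hq σ hσ)
      rw [← PA_union Q {v}] at hc ⊢
      obtain ⟨α, dα, hα⟩ := hA
      obtain ⟨β, dβ, hβ⟩ := hB
      rw [d_succ] at hα hβ
      obtain ⟨θ, dθ, h1, h2, -⟩ := mv1 (PA_closed _ _) (PA_closed _ _) hc dα hα dβ hβ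
      refine h2.of_add (De_cob' (PA_closed _ _) (PA_closed _ _) dθ h1 ?_)
      have cθ : Coc (PA Q {v} ∩ PA Q {v}ᶜ) q θ := ⟨dθ, h1.mono subset_rfl (inter_subset_left.trans subset_union_left)⟩
      let L : Set (Finset I) := {τ | ∃ σ ∈ Q, v ∈ σ ∧ τ = σ.erase v}
      let f : (I → ℝ) → I → ℝ := fun w i => if i = v then 0 else 2 * w i
      let g : (I → ℝ) → I → ℝ := fun w i => if i = v then 1 / 2 else w i / 2
      have hf : Continuous f := continuous_pi fun i => by simp only [f]; split_ifs <;> fun_prop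
      have hg : Continuous g := continuous_pi fun i => by simp only [g]; split_ifs <;> fun_prop
      have hwv : ∀ w ∈ PA Q {v} ∩ PA Q {v}ᶜ, w v = 1 / 2 := fun w hw => by
        have h1 := hw.1.2
        have h2 := hw.2.2
        have h3 := Finset.sum_add_sum_compl {v} w
        rw [hw.1.1.2.1] at h3
        simp only [Finset.sum_singleton] at h1 h3
        linarith
      have sf : ∀ w : I → ℝ, ∑ i, f w i = 2 * ∑ i ∈ {v}ᶜ, w i := fun w => by
        rw [← Finset.sum_add_sum_compl {v}, Finset.mul_sum]
        simp only [f, Finset.sum_singleton, if_true, zero_add]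
        exact Finset.sum_congr rfl fun i hi => by simp at hi; simp [hi]
      have sg : ∀ w : I → ℝ, ∑ i ∈ {v}ᶜ, g w i = (∑ i ∈ {v}ᶜ, w i) / 2 := fun w => by
        rw [Finset.sum_div]
        exact Finset.sum_congr rfl fun i hi => by simp at hi; simp [g, hi]
      have mf : MapsTo f (PA Q {v} ∩ PA Q {v}ᶜ) (Pol L) := by
        intro w hw
        have e := hwv w hw
        obtain ⟨⟨⟨w0, w1, σ, hσ, wσ⟩, -⟩, -⟩ := hw
        refine ⟨fun i => ?_, ?_, σ.erase v, ⟨σ, hσ, ?_, rfl⟩, fun i hi => ?_⟩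
        · simp only [f]; split_ifs; exacts [le_rfl, mul_nonneg zero_le_two (w0 i)]
        · rw [sf]
          have h3 := Finset.sum_add_sum_compl {v} w
          simp only [Finset.sum_singleton] at h3
          linarith
        · by_contra hn; rw [wσ v hn] at e; norm_num at e
        · by_cases hiv : i = v
          · simp [f, hiv]
          · simp [f, hiv, wσ i fun h => hi (by simp [h, hiv])]
      have mg : MapsTo g (Pol L) (PA Q {v} ∩ PA Q {v}ᶜ) := by
        rintro w ⟨w0, w1, _, ⟨σ, hσ, hvσ, rfl⟩, wσ⟩
        have wv : w v = 0 := wσ v (by simp)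
        have h3 := Finset.sum_add_sum_compl {v} w
        rw [w1] at h3
        simp only [Finset.sum_singleton, wv] at h3
        have h4 := Finset.sum_add_sum_compl {v} (g w)
        have h5 := sg w
        have h6 : g w v = 1 / 2 := by simp [g]
        simp only [Finset.sum_singleton, h6] at h4
        have hP : g w ∈ Pol Q := by
          refine ⟨fun i => ?_, by linarith, σ, hσ, fun i hi => ?_⟩
          · simp only [g]; have := w0 i; split_ifs <;> positivity
          · have : i ≠ v := by rintro rfl; exact hi hvσ
            simp [g, this, wσ i (by simp [hi])]
        exact ⟨⟨hP, by simp [h6]⟩, ⟨hP, by linarith⟩⟩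
      have h7 := ih L (by
        rintro _ ⟨σ, hσ, -, rfl⟩ i hi
        have := hQ σ hσ (Finset.mem_erase.1 hi).2
        simp at hi this; tauto) q (by
        rintro _ ⟨σ, hσ, hvσ, rfl⟩
        have := hq σ hσ
        rw [Finset.card_erase_of_mem hvσ]; omega) _ (cθ.pb hg.continuousOn mg)
      refine (h7.pb hf.continuousOn mf).congr fun t ht => ?_
      simp only [pb]
      congr 1; funext i j
      simp only [Function.comp, f, g]
      split_ifs with h
      · rw [h, hwv _ (ht i)]
      · ring

def BB : ℕ → ℕ
  | 0 => 1
  | j + 1 => BB j + Dg (j + 1) + 1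

theorem Pol_bound (j : ℕ) : ∀ (J : Finset I) (Q : Set (Finset I)), (∀ σ ∈ Q, σ ⊆ J) → ∀ z : ℕ → Co (I → ℝ),
    (∀ i, 1 ≤ i → i ≤ j → Coc (Pol Q) i (z i)) → ¬ Cob (Pol Q) (Dg j) (Wd z j) → BB j ≤ J.card := by
  induction j with
  | zero =>
    intro J Q hQ z _ h
    rw [BB, Nat.one_le_iff_ne_zero]
    intro h0
    obtain rfl := Finset.card_eq_zero.1 h0
    refine h ?_
    rw [Pol_empty fun σ hσ => by simpa using hQ σ hσ]
    exact Cob.of_NZ fun x hx => hx.elim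
  | succ j ih =>
    intro J Q hQ z hz h
    have h1 : ∃ σ ∈ Q, Dg (j + 1) < σ.card := by
      by_contra! hc
      exact h (Pol_dim J Q hQ _ hc _ (Wd_coc hz))
    obtain ⟨σ, hσ, hcard⟩ := h1
    have hz' : ∀ i, 1 ≤ i → i ≤ j → Coc (Pol Q) i (z i) := fun i h1 h2 => hz i h1 (by omega)
    have h2 := ih (J \ σ) (away Q σ) (by
      rintro _ ⟨τ, hτ, rfl⟩
      exact Finset.sdiff_subset_sdiff (hQ τ hτ) le_rfl) z (fun i h1 h2 => (hz' i h1 h2).mono (away_sub _ _)) (by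
      intro hc
      rw [← PC_compl] at hc
      have hB := PA_retr ((Wd_coc hz').mono fun _ h => h.1) hc
      have hA : Cob (PA Q σ) (j + 1) (z (j + 1)) := PA_cob (Or.inl hσ) (hz (j + 1) (by omega) le_rfl)
      refine h ?_
      have e := PA_union Q σ
      have := prod_cob (PA_closed Q σ) (PA_closed Q σᶜ) (by rw [e]; exact hz (j + 1) (by omega) le_rfl)
        (by rw [e]; exact Wd_coc hz') hA hB
      rwa [e] at this)
    rw [Finset.card_sdiff_of_subset (hQ σ hσ)] at h2
    have := Finset.card_le_card (hQ σ hσ)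
    simp only [BB]; omega

theorem Dg_two (j : ℕ) : 2 * Dg j = j * (j + 1) := by
  induction j with
  | zero => rfl
  | succ j ih => simp only [Dg, mul_add, ih]; ring

theorem BB_six (j : ℕ) : 6 * BB j = j * (j + 1) * (j + 2) + 6 * (j + 1) := by
  induction j with
  | zero => rfl
  | succ j ih =>
    have := Dg_two (j + 1)
    simp only [BB]; nlinarith

theorem BB_bound (n m : ℕ) (hn : 4 ≤ n) (hm : m = n / 2) :
    (4 * m ^ 3 + 3 * m ^ 2 + 5 * m + 12) / 6 ≤ BB (n - 1) := by
  have h := BB_six (n - 1)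
  have hm2 : 2 ≤ m := by omega
  have hnm : 2 * m - 1 ≤ n - 1 := by omega
  generalize n - 1 = j at *
  obtain ⟨a, rfl⟩ : ∃ a, m = a + 2 := ⟨m - 2, by omega⟩
  obtain ⟨b, rfl⟩ : ∃ b, j = b + (2 * a + 3) := ⟨j - (2 * a + 3), by omega⟩
  have : 4 * (a + 2) ^ 3 + 3 * (a + 2) ^ 2 + 5 * (a + 2) + 12 ≤ 6 * BB (b + (2 * a + 3)) := by
    rw [h]; ring_nf
    nlinarith [Nat.zero_le (a ^ 3), Nat.zero_le (a ^ 2), Nat.zero_le b, Nat.zero_le (b * a), Nat.zero_le (b ^ 2 * a), Nat.zero_le (b * a ^ 2), Nat.zero_le (b ^ 3), Nat.zero_le (b ^ 2)]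
  omega
end pol
end ASC
end

section
open Topology Set Filter

namespace ASC
section nerve
variable {I Y P : Type*} [Fintype I] [DecidableEq I] [TopologicalSpace Y] [TopologicalSpace P]

def US (V : I → Set Y) (σ : Finset I) : Set Y := ⋂ i ∈ σ, V i

theorem US_anti {V : I → Set Y} {σ τ : Finset I} (h : σ ⊆ τ) : US V τ ⊆ US V σ :=
  biInter_subset_biInter_left h

theorem US_open {V : I → Set Y} (h : ∀ i, IsOpen (V i)) (σ : Finset I) : IsOpen (US V σ) :=
  isOpen_biInter_finset fun i _ => h i

def CG (V : I → Set Y) (c : Finset I → ℝ → Y → Y) (y1 : Finset I → Y) : Prop :=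
  ∀ σ, σ.Nonempty → (US V σ).Nonempty → ContinuousOn (fun z : ℝ × Y => c σ z.1 z.2) (univ ×ˢ US V σ) ∧
    ∀ y ∈ US V σ, c σ 0 y = y ∧ c σ 1 y = y1 σ ∧ ∀ s, c σ s y ∈ US V σ

theorem exists_CG [Nonempty Y] (V : I → Set Y) (h : ∀ σ : Finset I, σ.Nonempty → (US V σ).Nonempty → ContractibleSpace ↥(US V σ)) :
    ∃ c y1, CG V c y1 := by
  have : ∀ σ : Finset I, ∃ (c : ℝ → Y → Y) (y1 : Y), σ.Nonempty → (US V σ).Nonempty →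
      ContinuousOn (fun z : ℝ × Y => c z.1 z.2) (univ ×ˢ US V σ) ∧
    ∀ y ∈ US V σ, c 0 y = y ∧ c 1 y = y1 ∧ ∀ s, c s y ∈ US V σ := by
    intro σ
    by_cases hσ : σ.Nonempty ∧ (US V σ).Nonempty
    · haveI := h σ hσ.1 hσ.2
      obtain ⟨a, ⟨F⟩⟩ := id_nullhomotopic ↥(US V σ)
      classical
      refine ⟨fun s y => if hy : y ∈ US V σ then (F (projIcc 0 1 zero_le_one s, ⟨y, hy⟩)).1 else y, a.1, fun _ _ => ⟨?_, fun y hy => ?_⟩⟩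
      · rw [continuousOn_iff_continuous_restrict]
        have hF : Continuous fun z : ↥((univ : Set ℝ) ×ˢ US V σ) =>
            (F (projIcc 0 1 zero_le_one z.1.1, ⟨z.1.2, z.2.2⟩)).1 := by
          refine continuous_subtype_val.comp (F.continuous.comp (Continuous.prodMk ?_ ?_))
          · exact continuous_projIcc.comp (continuous_fst.comp continuous_subtype_val)
          · exact Continuous.subtype_mk (continuous_snd.comp continuous_subtype_val) _
        refine hF.congr fun z => ?_
        simp [z.2.2]
      · refine ⟨?_, ?_, fun s => ?_⟩
        · simp [hy]
        · simp [hy]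
        · simp only [hy, dif_pos]; exact Subtype.coe_prop _
    · exact ⟨fun _ y => y, Classical.arbitrary Y, fun h1 h2 => (hσ ⟨h1, h2⟩).elim⟩
  choose c y1 hc using this
  exact ⟨c, y1, hc⟩

noncomputable def st (c : Finset I → ℝ → Y → Y) (t s : Finset I → ℝ) (y : Y) (σ : Finset I) : Y :=
  if 0 < t σ then c σ (s σ) y else y

def Act (t : Finset I → ℝ) : Prop :=
  (∀ σ, 0 < t σ → σ.Nonempty) ∧ ∀ σ τ, 0 < t σ → 0 < t τ → σ ⊆ τ ∨ τ ⊆ σ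

def Inv (V : I → Set Y) (t : Finset I → ℝ) (L : List (Finset I)) (y : Y) : Prop := ∀ τ ∈ L, 0 < t τ → y ∈ US V τ

variable {V : I → Set Y} {c : Finset I → ℝ → Y → Y} {y1 : Finset I → Y}

theorem inv_step (hc : CG V c y1) {t : Finset I → ℝ} (s : Finset I → ℝ) (ht : Act t) {L : List (Finset I)} {σ : Finset I} {y : Y}
    (h : Inv V t (σ :: L) y) (hL : ∀ τ ∈ L, τ.card ≤ σ.card) : Inv V t L (st c t s y σ) := by
  intro τ hτ ht0
  unfold st
  split_ifs with hs
  · have hy := h σ (by simp) hs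
    refine US_anti ?_ (((hc σ (ht.1 _ hs) ⟨y, hy⟩).2 y hy).2.2 (s σ))
    rcases ht.2 σ τ hs ht0 with h1 | h1
    · rw [Finset.eq_of_subset_of_card_le h1 (hL τ hτ)]
    · exact h1
  · exact h τ (by simp [hτ]) ht0

abbrev Srt (L : List (Finset I)) : Prop := L.Pairwise fun σ τ => τ.card ≤ σ.card

theorem inv_fold (hc : CG V c y1) {t : Finset I → ℝ} (s : Finset I → ℝ) (ht : Act t) (L1 : List (Finset I)) : ∀ (L2 : List (Finset I)) (y : Y),
    Srt (L1 ++ L2) → Inv V t (L1 ++ L2) y → Inv V t L2 (L1.foldl (st c t s) y) := by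
  induction L1 with
  | nil => intro L2 y _ h; exact h
  | cons σ L1 ih =>
    intro L2 y hL h
    simp only [List.cons_append, List.foldl_cons] at *
    exact ih L2 _ (List.pairwise_cons.1 hL).2 (inv_step hc s ht h (List.pairwise_cons.1 hL).1)

theorem cont_step (hV : ∀ i, IsOpen (V i)) (hc : CG V c y1) {S : Set P} {t s : P → Finset I → ℝ} {σ : Finset I} (ct : ContinuousOn (fun p => t p σ) S)
    (cs : ContinuousOn (fun p => s p σ) S) (hts : ∀ p ∈ S, t p σ < 1 → s p σ = 0) (ht : ∀ p ∈ S, Act (t p))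
    {y : P → Y} {p0 : P} (hp : p0 ∈ S) (cy : ContinuousWithinAt y S p0) (hi : ∀ p ∈ S, 0 < t p σ → y p ∈ US V σ) :
    ContinuousWithinAt (fun p => st c (t p) (s p) (y p) σ) S p0 := by
  rcases lt_or_ge 0 (t p0 σ) with h | h
  · have hy := hi p0 hp h
    have h1 : ∀ᶠ p in 𝓝[S] p0, 0 < t p σ := (ct p0 hp).eventually (lt_mem_nhds h)
    obtain ⟨h2, -⟩ := hc σ ((ht p0 hp).1 _ h) ⟨_, hy⟩
    have h3 : ContinuousAt (fun z : ℝ × Y => c σ z.1 z.2) (s p0 σ, y p0) :=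
      h2.continuousAt ((isOpen_univ.prod (US_open hV σ)).mem_nhds ⟨mem_univ _, hy⟩)
    have h4 : ContinuousWithinAt (fun p => c σ (s p σ) (y p)) S p0 :=
      ContinuousAt.comp_continuousWithinAt (f := fun p => (s p σ, y p)) h3 ((cs p0 hp).prodMk cy)
    refine h4.congr_of_eventuallyEq ?_ ?_
    · filter_upwards [h1] with p hp; simp [st, hp]
    · simp [st, h]
  · have h1 : ∀ᶠ p in 𝓝[S] p0, t p σ < 1 := (ct p0 hp).eventually (gt_mem_nhds (by linarith))
    have key : ∀ p ∈ S, t p σ < 1 → st c (t p) (s p) (y p) σ = y p := by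
      intro p hp h
      unfold st
      split_ifs with h0
      · rw [hts p hp h]
        have hy := hi p hp h0
        exact ((hc σ ((ht p hp).1 _ h0) ⟨_, hy⟩).2 _ hy).1
      · rfl
    refine cy.congr_of_eventuallyEq ?_ ?_
    · filter_upwards [h1, self_mem_nhdsWithin] with p hp hpS; exact key p hpS hp
    · exact key p0 hp (by linarith)

theorem cont_fold (hV : ∀ i, IsOpen (V i)) (hc : CG V c y1) {S : Set P} {t s : P → Finset I → ℝ} (ct : ∀ σ, ContinuousOn (fun p => t p σ) S)
    (cs : ∀ σ, ContinuousOn (fun p => s p σ) S) (hts : ∀ p ∈ S, ∀ σ, t p σ < 1 → s p σ = 0) (ht : ∀ p ∈ S, Act (t p))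
    {p0 : P} (hp : p0 ∈ S) (L : List (Finset I)) : ∀ (y : P → Y), Srt L → ContinuousWithinAt y S p0 →
    (∀ p ∈ S, Inv V (t p) L (y p)) → ContinuousWithinAt (fun p => L.foldl (st c (t p) (s p)) (y p)) S p0 := by
  induction L with
  | nil => intro y _ cy _; exact cy
  | cons σ L ih =>
    intro y hL cy hi
    simp only [List.foldl_cons]
    exact ih _ (List.pairwise_cons.1 hL).2 (cont_step hV hc (ct σ) (cs σ) (fun p hp => hts p hp σ) ht hp cy fun p hp => hi p hp σ (by simp))
      fun p hp => inv_step hc _ (ht p hp) (hi p hp) (List.pairwise_cons.1 hL).1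

theorem zero_fold (hc : CG V c y1) {t s : Finset I → ℝ} (ht : Act t) (hs : ∀ σ, s σ = 0) (L : List (Finset I)) (y : Y) (hi : Inv V t L y) :
    L.foldl (st c t s) y = y := by
  induction L with
  | nil => rfl
  | cons σ L ih =>
    have : st c t s y σ = y := by
      unfold st
      split_ifs with h0
      · have hy := hi σ (by simp) h0
        rw [hs, ((hc σ (ht.1 _ h0) ⟨_, hy⟩).2 _ hy).1]
      · rfl
    rw [List.foldl_cons, this]
    exact ih fun τ hτ => hi τ (by simp [hτ])

/-- when some weight is one, the process forgets its start -/
theorem one_fold (hc : CG V c y1) {t s : Finset I → ℝ} (ht : Act t) {σ : Finset I} (h0 : 0 < t σ) (h1 : s σ = 1)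
    {L1 L2 : List (Finset I)} (hL : Srt (L1 ++ σ :: L2)) {y : Y} (hi : Inv V t (L1 ++ σ :: L2) y) :
    (L1 ++ σ :: L2).foldl (st c t s) y = L2.foldl (st c t s) (y1 σ) := by
  have h2 := inv_fold hc s ht L1 _ y hL hi
  have hy := h2 σ (by simp) h0
  rw [List.foldl_append, List.foldl_cons]
  congr 1
  rw [st, if_pos h0, h1, ((hc σ (ht.1 _ h0) ⟨_, hy⟩).2 _ hy).2.1]

/-- the gap functions -/
noncomputable def gp (w : I → ℝ) (σ : Finset I) : ℝ :=
  if σ.Nonempty then (∏ i ∈ σ, max 0 (w i)) * ∏ i ∈ σ, ∏ j ∈ σᶜ, max 0 (w i - w j) else 0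

theorem gp_cont (σ : Finset I) : Continuous fun w : I → ℝ => gp w σ := by
  unfold gp
  split_ifs <;> fun_prop

theorem gp_nonneg (w : I → ℝ) (σ : Finset I) : 0 ≤ gp w σ := by
  unfold gp
  split_ifs
  · exact mul_nonneg (Finset.prod_nonneg fun i _ => le_max_left _ _)
      (Finset.prod_nonneg fun i _ => Finset.prod_nonneg fun i _ => le_max_left _ _)
  · exact le_rfl

theorem gp_pos {w : I → ℝ} {σ : Finset I} : 0 < gp w σ ↔ σ.Nonempty ∧ (∀ i ∈ σ, 0 < w i) ∧ ∀ i ∈ σ, ∀ j ∉ σ, w j < w i := by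
  rw [(gp_nonneg w σ).lt_iff_ne', gp]
  split_ifs with h
  · simp only [h, true_and, mul_ne_zero_iff, Finset.prod_ne_zero_iff, Finset.mem_compl]
    refine and_congr (forall₂_congr fun i _ => ?_) (forall₂_congr fun i _ => forall₂_congr fun j _ => ?_)
    · rw [← (le_max_left 0 (w i)).lt_iff_ne']; simp
    · rw [← (le_max_left 0 (w i - w j)).lt_iff_ne']; simp
  · simp [h]

theorem gp_act (w : I → ℝ) {t : Finset I → ℝ} (h : ∀ σ, 0 < t σ → 0 < gp w σ) : Act t := by
  refine ⟨fun σ hσ => (gp_pos.1 (h σ hσ)).1, fun σ τ hσ hτ => ?_⟩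
  have h1 := (gp_pos.1 (h σ hσ)).2.2
  have h2 := (gp_pos.1 (h τ hτ)).2.2
  by_contra! hc
  obtain ⟨i, hi, hi'⟩ := Finset.not_subset.1 hc.1
  obtain ⟨j, hj, hj'⟩ := Finset.not_subset.1 hc.2
  exact lt_asymm (h1 i hi j hj') (h2 j hj i hi')

noncomputable def tw (w : I → ℝ) (σ : Finset I) : ℝ :=
  3 * (Fintype.card (Finset I)) * gp w σ / ∑ τ, gp w τ

theorem sum_gp_pos {Q : Set (Finset I)} {w : I → ℝ} (hw : w ∈ Pol Q) : 0 < ∑ τ, gp w τ := by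
  refine Finset.sum_pos' (fun _ _ => gp_nonneg _ _) ⟨Finset.univ.filter fun i => 0 < w i, Finset.mem_univ _, gp_pos.2 ⟨?_, ?_, ?_⟩⟩
  · by_contra hn
    rw [Finset.not_nonempty_iff_eq_empty, Finset.filter_eq_empty_iff] at hn
    have := Finset.sum_nonpos fun i (hi : i ∈ Finset.univ) => not_lt.1 (hn hi)
    linarith [hw.2.1]
  · simp
  · intro i hi j hj
    simp at hi hj; linarith

theorem tw_pos {Q : Set (Finset I)} {w : I → ℝ} (hw : w ∈ Pol Q) {σ : Finset I} (h : 0 < tw w σ) : 0 < gp w σ := by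
  refine (gp_nonneg _ _).lt_of_ne' fun e => ?_
  simp [tw, e] at h

theorem tw_big {Q : Set (Finset I)} {w : I → ℝ} (hw : w ∈ Pol Q) : ∃ σ, 2 < tw w σ := by
  have hs := sum_gp_pos hw
  by_contra! hc
  have h1 : ∑ σ, tw w σ ≤ ∑ σ : Finset I, 2 := Finset.sum_le_sum fun σ _ => hc σ
  have h2 : ∑ σ, tw w σ = 3 * (Fintype.card (Finset I)) := by
    simp only [tw, ← Finset.sum_div, ← Finset.mul_sum]
    rw [mul_div_assoc, div_self hs.ne', mul_one]
  rw [h2] at h1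
  simp only [Finset.sum_const, Finset.card_univ, nsmul_eq_mul] at h1
  have : (0 : ℝ) < Fintype.card (Finset I) := by exact_mod_cast Fintype.card_pos
  linarith

theorem tw_cont (Q : Set (Finset I)) (σ : Finset I) : ContinuousOn (fun w => tw w σ) (Pol Q) := by
  unfold tw
  refine ContinuousOn.div (continuousOn_const.mul (gp_cont σ).continuousOn) ?_ fun w hw => (sum_gp_pos hw).ne'
  exact (continuous_finsetSum _ fun τ _ => gp_cont τ).continuousOn

noncomputable def sw (w : I → ℝ) (σ : Finset I) : ℝ := max 0 (min 1 (tw w σ - 1))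

theorem sw_cont (Q : Set (Finset I)) (σ : Finset I) : ContinuousOn (fun w => sw w σ) (Pol Q) := by
  have := tw_cont Q σ
  unfold sw
  exact continuousOn_const.sup (continuousOn_const.inf (this.sub continuousOn_const))

theorem sw_zero {w : I → ℝ} {σ : Finset I} (h : tw w σ < 1) : sw w σ = 0 := by
  unfold sw; exact max_eq_left ((min_le_right _ _).trans (by linarith))
theorem sw_one {w : I → ℝ} {σ : Finset I} (h : 2 < tw w σ) : sw w σ = 1 := by
  unfold sw; rw [min_eq_left (by linarith)]; simp

theorem exists_list (I : Type*) [Fintype I] [DecidableEq I] : ∃ L : List (Finset I), Srt L ∧ ∀ σ, σ ∈ L := by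
  let r : Finset I → Finset I → Prop := fun σ τ => τ.card ≤ σ.card
  haveI : Std.Total r := ⟨fun a b => le_total _ _⟩
  haveI : IsTrans _ r := ⟨fun a b c h1 h2 => h2.trans h1⟩
  exact ⟨(Finset.univ : Finset (Finset I)).toList.insertionSort r, List.pairwise_insertionSort r _, fun σ => by simp⟩

theorem nerve {X : Type*} [TopologicalSpace X] [CompactSpace X] [T2Space X] [Nonempty X] {f : X → Y} (hf : Continuous f)
    (hV : ∀ i, IsOpen (V i)) (hcov : ⋃ i, V i = univ)
    (hcon : ∀ σ : Finset I, σ.Nonempty → (US V σ).Nonempty → ContractibleSpace ↥(US V σ)) :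
    ∃ (Q : Set (Finset I)) (l : X → I → ℝ) (G : (I → ℝ) → Y) (H : ℝ → X → Y), Continuous l ∧ (∀ x, l x ∈ Pol Q) ∧
      ContinuousOn G (Pol Q) ∧ ContinuousOn (fun z : ℝ × X => H z.1 z.2) (Icc 0 1 ×ˢ univ) ∧ (∀ x, H 0 x = f x) ∧
      ∀ x, H 1 x = G (l x) := by
  haveI : Nonempty Y := ⟨f (Classical.arbitrary X)⟩
  obtain ⟨c, y1, hc⟩ := exists_CG V hcon
  obtain ⟨L, hL, mL⟩ := exists_list I
  let Q : Set (Finset I) := {σ | (US V σ).Nonempty}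
  obtain ⟨ρ, hρ⟩ := PartitionOfUnity.exists_isSubordinate (s := (univ : Set X)) isClosed_univ (fun i => f ⁻¹' V i)
    (fun i => (hV i).preimage hf) (by rw [← preimage_iUnion, hcov]; simp)
  let l : X → I → ℝ := fun x i => ρ i x
  have hl : ∀ x i, l x i ≠ 0 → f x ∈ V i := fun x i h => hρ i (subset_tsupport _ h)
  have lP : ∀ x, l x ∈ Pol Q := by
    intro x
    refine ⟨fun i => ρ.nonneg i x, ?_, Finset.univ.filter fun i => l x i ≠ 0, ⟨f x, ?_⟩, fun i hi => by simpa using hi⟩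
    · have := ρ.sum_eq_one (mem_univ x)
      rwa [finsum_eq_sum_of_fintype] at this
    · simp only [US, mem_iInter, Finset.mem_filter]
      exact fun i hi => hl x i hi.2
  have cl : Continuous l := continuous_pi fun i => (ρ i).continuous
  have hsel : ∀ w, ∃ y, w ∈ Pol Q → ∀ i, 0 < w i → y ∈ V i := by
    intro w
    by_cases hw : w ∈ Pol Q
    · obtain ⟨-, -, σ, ⟨y, hy⟩, h⟩ := hw
      refine ⟨y, fun _ i hi => ?_⟩
      by_contra hn
      have : i ∉ σ := fun hiσ => hn (mem_iInter₂.1 hy i hiσ)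
      rw [h i this] at hi; exact lt_irrefl _ hi
    · exact ⟨Classical.arbitrary Y, fun h => (hw h).elim⟩
  choose y0 hy0 using hsel
  have act : ∀ w ∈ Pol Q, Act (tw w) := fun w hw => gp_act w fun σ h => tw_pos hw h
  have inv0 : ∀ w ∈ Pol Q, ∀ y, (∀ i, 0 < w i → y ∈ V i) → ∀ L, Inv V (tw w) L y := by
    intro w hw y hy L τ _ ht
    exact mem_iInter₂.2 fun i hi => hy i ((gp_pos.1 (tw_pos hw ht)).2.1 i hi)
  let G : (I → ℝ) → Y := fun w => L.foldl (st c (tw w) (sw w)) (y0 w)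
  let H : ℝ → X → Y := fun u x => L.foldl (st c (tw (l x)) (fun σ => u * sw (l x) σ)) (f x)
  have fi : ∀ x L, Inv V (tw (l x)) L (f x) := fun x L => inv0 _ (lP x) _ (fun i hi => hl x i hi.ne') L
  refine ⟨Q, l, G, H, cl, lP, fun w hw => ?_, fun z hz => ?_, fun x => ?_, fun x => ?_⟩
  · obtain ⟨σ, hσ⟩ := tw_big hw
    obtain ⟨L1, L2, rfl⟩ := List.append_of_mem (mL σ)
    have h2 : ∀ᶠ w' in 𝓝[Pol Q] w, 2 < tw w' σ := (tw_cont Q σ w hw).eventually (lt_mem_nhds hσ)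
    have key := cont_fold (s := sw) hV hc (tw_cont Q) (sw_cont Q) (fun p _ σ h => sw_zero h) act hw L2
      (fun w' => (L1 ++ [σ]).foldl (st c (tw w') (sw w')) (y0 w')) (hL.sublist (by simp)) ?_ ?_
    · refine key.congr (fun w' _ => ?_) ?_ <;> simp [G]
    · refine (continuousWithinAt_const (b := y1 σ)).congr_of_eventuallyEq ?_ ?_
      · filter_upwards [h2, self_mem_nhdsWithin] with w' h3 hw'
        exact one_fold hc (act w' hw') (by linarith) (sw_one h3) (L2 := []) (hL.sublist (by simp))
          (inv0 w' hw' _ (hy0 w' hw') _)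
      · exact one_fold hc (act w hw) (by linarith) (sw_one hσ) (L2 := []) (hL.sublist (by simp))
          (inv0 w hw _ (hy0 w hw) _)
    · intro w' hw'
      exact inv_fold hc _ (act w' hw') _ L2 _ (by simpa using hL) (inv0 w' hw' _ (hy0 w' hw') _)
  · have hm : MapsTo (fun z : ℝ × X => l z.2) (Icc 0 1 ×ˢ univ) (Pol Q) := fun z _ => lP z.2
    have hcl : ContinuousOn (fun z : ℝ × X => l z.2) (Icc 0 1 ×ˢ univ) := (cl.comp continuous_snd).continuousOn
    exact cont_fold (t := fun z : ℝ × X => tw (l z.2)) (s := fun z : ℝ × X => fun σ => z.1 * sw (l z.2) σ) hV hc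
      (fun σ => (tw_cont Q σ).comp hcl hm) (fun σ => continuousOn_fst.mul ((sw_cont Q σ).comp hcl hm))
      (fun p _ σ h => by simp [sw_zero h]) (fun p _ => act _ (lP _)) hz L (fun z => f z.2) hL
      (hf.comp continuous_snd).continuousWithinAt fun p _ => fi _ _
  · exact zero_fold hc (act _ (lP x)) (fun σ => by simp) L _ (fi x L)
  · obtain ⟨σ, hσ⟩ := tw_big (lP x)
    obtain ⟨L1, L2, rfl⟩ := List.append_of_mem (mL σ)
    simp only [H, G, one_mul]
    rw [one_fold hc (act _ (lP x)) (by linarith) (sw_one hσ) hL (fi x _),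
      one_fold hc (act _ (lP x)) (by linarith) (sw_one hσ) hL (inv0 _ (lP x) _ (hy0 _ (lP x)) _)]
end nerve
end ASC
end

section
open Topology Set Filter

namespace ASC
theorem mem_SOk_iff (n : ℕ) (A : Matrix (Fin n) (Fin n) ℝ) :
    A ∈ SOk n n ↔ A ∈ Matrix.specialOrthogonalGroup (Fin n) ℝ := by
  rw [Matrix.mem_specialOrthogonalGroup_iff, Matrix.mem_orthogonalGroup_iff']
  constructor
  · rintro ⟨h1, h2, -⟩; exact ⟨h1, h2⟩
  · rintro ⟨h1, h2⟩; exact ⟨h1, h2, fun i hi => absurd i.2 (by omega)⟩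

theorem final {X Y : Type*} [TopologicalSpace X] [CompactSpace X] [T2Space X] [Nonempty X] [TopologicalSpace Y]
    (e : ContinuousMap.HomotopyEquiv X Y) {j : ℕ} {z : ℕ → Co X} (hz : ∀ i, 1 ≤ i → i ≤ j → Coc univ i (z i))
    (hn : ¬ Cob univ (Dg j) (Wd z j)) {I : Type*} [Fintype I] [DecidableEq I] {V : I → Set Y}
    (hV : ∀ i, IsOpen (V i)) (hcov : ⋃ i, V i = univ)
    (hcon : ∀ σ : Finset I, σ.Nonempty → (US V σ).Nonempty → ContractibleSpace ↥(US V σ)) : BB j ≤ Fintype.card I := by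
  obtain ⟨Q, l, G, H, cl, lP, cG, cH, H0, H1⟩ := nerve e.toFun.continuous hV hcov hcon
  let g := e.invFun
  have cgG : ContinuousOn (fun w => g (G w)) (Pol Q) := g.continuous.comp_continuousOn cG
  have hW := Wd_coc hz
  refine Pol_bound j Finset.univ Q (fun σ _ => Finset.subset_univ σ) (fun i => pb (fun w => g (G w)) (z i))
    (fun i h1 h2 => (hz i h1 h2).pb cgG (mapsTo_univ _ _)) fun hc => hn ?_
  rw [Wd_pb] at hc
  have h1 : Cob univ (Dg j) (pb l (pb (fun w => g (G w)) (Wd z j))) := hc.pb cl.continuousOn fun x _ => lP x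
  have h2 := homot (A := univ) (B := univ) (H := fun s x => g (H s x)) isCompact_univ
    (g.continuous.comp_continuousOn cH) (fun _ _ _ _ => mem_univ _) hW
  obtain ⟨K⟩ := e.left_inv
  have h3 := homot (A := univ) (B := univ) (H := fun s x => K (projIcc 0 1 zero_le_one s, x)) isCompact_univ
    (K.continuous.comp ((continuous_projIcc.comp continuous_fst).prodMk continuous_snd)).continuousOn
    (fun _ _ _ _ => mem_univ _) hW
  have e1 : (fun x => K (projIcc 0 1 zero_le_one (0 : ℝ), x)) = fun x => g (H 0 x) := by
    funext x; rw [projIcc_left, H0]; exact K.apply_zero x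
  have e2 : (fun x => K (projIcc 0 1 zero_le_one (1 : ℝ), x)) = fun x => x := by
    funext x; rw [projIcc_right]; exact K.apply_one x
  have e3 : (fun x => g (H 1 x)) = fun x => g (G (l x)) := by funext x; rw [H1]
  rw [e1, e2] at h3
  rw [e3] at h2
  exact (h3.symm.trans h2).of_add h1

theorem SO_final (n : ℕ) (hn : 4 ≤ n) (m : ℕ) (hm : m = n / 2) (Y : Type*) [TopologicalSpace Y]
    (h : Nonempty (ContinuousMap.HomotopyEquiv ↥(Matrix.specialOrthogonalGroup (Fin n) ℝ) Y))
    {I : Type*} [Fintype I] [DecidableEq I] {V : I → Set Y}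
    (hV : ∀ i, IsOpen (V i)) (hcov : ⋃ i, V i = univ)
    (hcon : ∀ σ : Finset I, σ.Nonempty → (US V σ).Nonempty → ContractibleSpace ↥(US V σ)) :
    (4 * m ^ 3 + 3 * m ^ 2 + 5 * m + 12) / 6 ≤ Fintype.card I := by
  classical
  obtain ⟨e⟩ := h
  refine (BB_bound n m hn hm).trans ?_
  obtain ⟨-, z, hz, hne⟩ := SO_main (n := n) (by omega) (n - 1) (by omega)
  rw [show n - 1 + 1 = n by omega] at hz hne
  have hS : (SOk n n) = ((Matrix.specialOrthogonalGroup (Fin n) ℝ : Set (Matrix (Fin n) (Fin n) ℝ))) := by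
    ext A; exact mem_SOk_iff n A
  haveI : CompactSpace ↥(Matrix.specialOrthogonalGroup (Fin n) ℝ) := by
    have := SOk_compact n n
    rw [hS] at this
    exact isCompact_iff_compactSpace.1 this
  let r : Matrix (Fin n) (Fin n) ℝ → ↥(Matrix.specialOrthogonalGroup (Fin n) ℝ) := fun A =>
    if hA : A ∈ Matrix.specialOrthogonalGroup (Fin n) ℝ then ⟨A, hA⟩ else 1
  have hr : ∀ A ∈ SOk n n, ((r A : ↥(Matrix.specialOrthogonalGroup (Fin n) ℝ)) : Matrix (Fin n) (Fin n) ℝ) = A := by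
    intro A hA
    simp only [r, dif_pos ((mem_SOk_iff n A).1 hA)]
  have cr : ContinuousOn r (SOk n n) := by
    rw [Topology.IsInducing.subtypeVal.continuousOn_iff]
    exact continuousOn_id.congr hr
  refine final e (z := fun i => pb Subtype.val (z i)) (fun i h1 h2 => (hz i h1 h2).pb continuous_subtype_val.continuousOn
    fun x _ => (mem_SOk_iff n _).2 x.2) (fun hc => hne ?_) hV hcov hcon
  rw [Wd_pb] at hc
  refine (hc.pb cr (mapsTo_univ _ _)).congr fun t ht => ?_
  show Wd z (n - 1) (fun i => (r (t i) : Matrix (Fin n) (Fin n) ℝ)) = _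
  congr 1
  funext i
  exact hr _ (ht i)
end ASC
end

/-- The covering type of the special orthogonal group `SO(n)` is at least
`(4m³+3m²+5m+12)/6` with `m = ⌊n/2⌋`: every good cover of any space homotopy equivalent
to `SO(n)` has at least that many members.  (The numerator is divisible by 6, so `/` is
exact; `n / 2` is natural (floor) division.) -/
theorem stmt12 (n : ℕ) (hn : 4 ≤ n) (m : ℕ) (hm : m = n / 2)
    (Y : Type*) [TopologicalSpace Y]
    (h : Nonempty (ContinuousMap.HomotopyEquiv ↥(Matrix.specialOrthogonalGroup (Fin n) ℝ) Y))
    (U : Finset (Set Y)) (hU : IsGoodCover U) :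
    (4 * m ^ 3 + 3 * m ^ 2 + 5 * m + 12) / 6 ≤ U.card := by
  classical
  obtain ⟨h1, h2, h3⟩ := hU
  have hUS : ∀ σ : Finset ↥U, ASC.US (fun i : ↥U => (i : Set Y)) σ
      = ⋂₀ ((σ.map (Function.Embedding.subtype _) : Finset (Set Y)) : Set (Set Y)) := by
    intro σ
    ext y
    simp [ASC.US]
  have := ASC.SO_final n hn m hm Y h (I := ↥U) (V := fun i => (i : Set Y)) (fun i => h1 _ i.2)
    (by rw [← h2, Set.sUnion_eq_iUnion]; rfl) (fun σ h4 h5 => by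
      rw [hUS] at h5 ⊢
      refine h3 _ ?_ (by simpa using h4) h5
      intro s hs
      obtain ⟨i, -, rfl⟩ := Finset.mem_map.1 hs
      exact i.2)
  simpa using this
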